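/- arXiv:2004.03308 — 2 statements merged into one kernel-verified Lean document; each statement's English description precedes it below -/
import Mathlib

section
/- Let a ∈ P*₋ and b, c ∈ P*₊ be such that the underlying primes of a, b, c are pairwise distinct, and let K = ℚ(√a, √b, √c). Then 2 divides the class number h(K). -/
open NumberField

/-- `Qsqrt m` is the subfield `ℚ(√m)` of `ℂ`, generated by a square root of `m`. -/
noncomputable def Qsqrt (m : ℤ) : IntermediateField ℚ ℂ :=
  IntermediateField.adjoin ℚ {(m : ℂ) ^ ((1 : ℂ) / 2)}

/-- `m` belongs to `P* = {8, -4, -8} ∪ {p* : p odd prime}` where `p* = (-1)^((p-1)/2) * p`. -/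
def Pstar (m : ℤ) : Prop :=
  m = 8 ∨ m = -4 ∨ m = -8 ∨ ∃ p : ℕ, p.Prime ∧ Odd p ∧ m = (-1) ^ ((p - 1) / 2) * (p : ℤ)

/-- The underlying prime of an element of `P*`: `2` for `8, -4, -8`, and `p` for `p*`. -/
def underlyingPrime (m : ℤ) : ℕ :=
  if m = 8 ∨ m = -4 ∨ m = -8 then 2 else m.natAbs


theorem cyc_sq {G : Type*} [CommGroup G] [IsCyclic G] (u v : G) :
    IsSquare u ∨ IsSquare v ∨ IsSquare (u * v) := by
  obtain ⟨g, hg⟩ := IsCyclic.exists_generator (α := G)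
  obtain ⟨i, rfl⟩ := Subgroup.mem_zpowers_iff.1 (hg u)
  obtain ⟨j, rfl⟩ := Subgroup.mem_zpowers_iff.1 (hg v)
  rcases Int.even_or_odd i with hi | hi
  · left; exact hi.isSquare_zpow g
  rcases Int.even_or_odd j with hj | hj
  · right; left; exact hj.isSquare_zpow g
  · right; right; rw [← zpow_add]; exact (hi.add_odd hj).isSquare_zpow g

open IsCMField Units in
theorem exists_tors (K : Type*) [Field K] [NumberField K] [IsCMField K]
    (x : 𝓞 K) (hx : x ≠ 0) 
    (h : Ideal.map (ringOfIntegersComplexConj K) (Ideal.span {x}) = Ideal.span {x}) :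
    ∃ u : torsion K, ringOfIntegersComplexConj K x = x * (u : (𝓞 K)ˣ) := by
  rw [Ideal.map_span, Set.image_singleton, Ideal.span_singleton_eq_span_singleton] at h
  obtain ⟨u, hu⟩ := h.symm
  refine ⟨⟨u, (mem_torsion K).mpr fun w ↦ ?_⟩, hu.symm⟩
  have h2 := congrArg (fun y : 𝓞 K => w (y : K)) hu
  simp only [coe_ringOfIntegersComplexConj, infinitePlace_complexConj] at h2
  have hx' : w (x : K) ≠ 0 := by simpa using hx
  push_cast at h2
  rw [map_mul] at h2
  exact mul_left_cancel₀ hx' (by rw [mul_one]; exact h2)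

open IsCMField Units in
theorem exists_fixed (K : Type*) [Field K] [NumberField K] [IsCMField K]
    (x : 𝓞 K) (u : torsion K) (hu : ringOfIntegersComplexConj K x = x * (u : (𝓞 K)ˣ))
    (hsq : IsSquare u) :
    ∃ y : 𝓞 K, Ideal.span {y} = Ideal.span {x} ∧ ringOfIntegersComplexConj K y = y := by
  obtain ⟨z, rfl⟩ := hsq
  refine ⟨x * (z : (𝓞 K)ˣ), ?_, ?_⟩
  · rw [Ideal.span_singleton_mul_right_unit (Units.isUnit _)]
  · rw [map_mul, hu]
    have : ringOfIntegersComplexConj K ((z : (𝓞 K)ˣ) : 𝓞 K) = ((z⁻¹ : (𝓞 K)ˣ) : 𝓞 K) := by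
      have := congrArg (fun t : (𝓞 K)ˣ => (t : 𝓞 K)) (unitsComplexConj_torsion K z)
      exact this
    rw [this]
    push_cast
    have h1 : ((z : (𝓞 K)ˣ) : 𝓞 K) * ((z⁻¹ : (𝓞 K)ˣ) : 𝓞 K) = 1 := by
      rw [← Units.val_mul]; simp
    linear_combination (x * ((z : (𝓞 K)ˣ) : 𝓞 K)) * h1

open IsCMField Units in
theorem two_dvd_of_primes (K : Type*) [Field K] [NumberField K] [IsCMField K]
    (P Q : Ideal (𝓞 K)) [hP : P.IsPrime] [hQ : Q.IsPrime] (hP0 : P ≠ ⊥) (hQ0 : Q ≠ ⊥) (hPQ : P ≠ Q)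
    (hPc : P.map (ringOfIntegersComplexConj K) = P) (hQc : Q.map (ringOfIntegersComplexConj K) = Q)
    (hPe : ∀ x : 𝓞 K, x ≠ 0 → ringOfIntegersComplexConj K x = x →
      Even (multiplicity P (Ideal.span {x})))
    (hQe : ∀ x : 𝓞 K, x ≠ 0 → ringOfIntegersComplexConj K x = x →
      Even (multiplicity Q (Ideal.span {x}))) :
    2 ∣ Nat.card (ClassGroup (𝓞 K)) := by
  by_contra hodd
  set h := Nat.card (ClassGroup (𝓞 K)) with hh
  have hodd' : Odd h := by rwa [← Nat.not_even_iff_odd, even_iff_two_dvd]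
  have hPp : Prime P := Ideal.prime_of_isPrime hP0 hP
  have hQp : Prime Q := Ideal.prime_of_isPrime hQ0 hQ
  have key : ∀ J : Ideal (𝓞 K), J ≠ ⊥ → ∃ x : 𝓞 K, J ^ h = Ideal.span {x} := by
    intro J hJ
    have h1 : ClassGroup.mk0 ⟨J, mem_nonZeroDivisors_of_ne_zero hJ⟩ ^ h = 1 := pow_card_eq_one'
    rw [← map_pow, SubmonoidClass.mk_pow, ClassGroup.mk0_eq_one_iff] at h1
    exact ⟨_, (Submodule.IsPrincipal.span_singleton_generator (J ^ h)).symm⟩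
  obtain ⟨x, hx⟩ := key P hP0
  obtain ⟨y, hy⟩ := key Q hQ0
  have hx0 : x ≠ 0 := by
    rintro rfl
    exact hP0 (pow_eq_zero_iff (hodd'.pos.ne') |>.1 (by simpa using hx))
  have hy0 : y ≠ 0 := by
    rintro rfl
    exact hQ0 (pow_eq_zero_iff (hodd'.pos.ne') |>.1 (by simpa using hy))
  obtain ⟨u, hu⟩ := exists_tors K x hx0 (by rw [← hx, Ideal.map_pow, hPc])
  obtain ⟨v, hv⟩ := exists_tors K y hy0 (by rw [← hy, Ideal.map_pow, hQc])
  have fin : ∀ z : 𝓞 K, z ≠ 0 → ∀ u : torsion K,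
     ringOfIntegersComplexConj K z = z * (u : (𝓞 K)ˣ) → IsSquare u →
     Even (multiplicity P (Ideal.span {z})) ∧ Even (multiplicity Q (Ideal.span {z})) := by
    intro z hz u hu hs
    obtain ⟨w, hw, hw'⟩ := exists_fixed K z u hu hs
    have hw0 : w ≠ 0 := by
      rintro rfl
      apply hz
      rw [← Ideal.span_singleton_eq_bot, ← hw]; simp
    rw [← hw]
    exact ⟨hPe w hw0 hw', hQe w hw0 hw'⟩
  have hno : ¬ Even h := Nat.not_even_iff_odd.2 hodd'
  rcases cyc_sq u v with hs | hs | hs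
  · have := (fin x hx0 u hu hs).1
    rw [← hx, multiplicity_pow_self_of_prime hPp] at this
    exact hno this
  · have := (fin y hy0 v hv hs).2
    rw [← hy, multiplicity_pow_self_of_prime hQp] at this
    exact hno this
  · have := (fin (x * y) (mul_ne_zero hx0 hy0) (u * v) (by rw [map_mul, hu, hv]; push_cast; ring) hs).1
    rw [← Ideal.span_singleton_mul_span_singleton, ← hx, ← hy, multiplicity_mul hPp,
      multiplicity_pow_self_of_prime hPp, multiplicity_eq_zero.2, add_zero] at this
    · exact hno this
    · intro hd
      have h1 := hPp.dvd_of_dvd_pow hd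
      rw [Ideal.dvd_iff_le] at h1
      exact hPQ ((hQ.isMaximal hQ0).eq_of_le hP.ne_top h1).symm
    · apply FiniteMultiplicity.of_prime_left hPp
      rw [hx, hy, Ideal.span_singleton_mul_span_singleton]
      simpa using ⟨hx0, hy0⟩

open IsCMField in
theorem even_mult (K : Type*) [Field K] [NumberField K] [IsCMField K]
    (P : Ideal (𝓞 K)) [hP : P.IsPrime] (hP0 : P ≠ ⊥)
    (hc : ∀ x : 𝓞 K, ringOfIntegersComplexConj K x - x ∈ P)
    (x : 𝓞 K) (hx0 : x ≠ 0) (hx : ringOfIntegersComplexConj K x = x) :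
    Even (multiplicity P (Ideal.span {x})) := by
  rw [ringOfIntegersComplexConj_eq_self_iff] at hx
  obtain ⟨y, rfl⟩ := hx
  have hy0 : y ≠ 0 := by rintro rfl; simp at hx0
  let q := P.under (𝓞 (maximalRealSubfield K))
  have hq0 : q ≠ ⊥ := by
    intro h
    exact hP0 (Ideal.eq_bot_of_comap_eq_bot h)
  have hcard : Nat.card (P.inertia Gal(K/maximalRealSubfield K)) = 2 := by
    have : P.inertia Gal(K/maximalRealSubfield K) = ⊤ := by
      rw [eq_top_iff, ← zpowers_complexConj_eq_top, Subgroup.zpowers_le]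
      intro x
      exact hc x
    rw [this, Subgroup.card_top, IsGalois.card_aut_eq_finrank,
      Algebra.IsQuadraticExtension.finrank_eq_two]
  rw [Ideal.card_inertia_eq_ramificationIdxIn q P,
    Ideal.ramificationIdxIn_eq_ramificationIdx q P Gal(K/maximalRealSubfield K)] at hcard
  have h2 : q.ramificationIdx' P = 2 := by
    rw [← hcard, Ideal.ramificationIdx'_eq_ramificationIdx]
    exact hq0
  have hPi := (Ideal.prime_of_isPrime hP0 hP).irreducible
  have hqi := (Ideal.prime_of_isPrime hq0 (inferInstance)).irreducible
  have h3 := Ideal.IsDedekindDomain.emultiplicity_map_eq_ramificationIdx'_mul (I := Ideal.span {y}) (by simpa using hy0) hqi hPi hP0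
  rw [h2, (FiniteMultiplicity.of_prime_left hqi.prime (by simpa using hy0)).emultiplicity_eq_multiplicity, Ideal.map_span, Set.image_singleton] at h3
  have h4 := multiplicity_eq_of_emultiplicity_eq_some (n := 2 * multiplicity q (Ideal.span {y})) (by rw [h3]; push_cast; rfl)
  rw [h4]
  exact even_two_mul _
open Pointwise

theorem theta (K : Type*) [Field K] [NumberField K] (p : ℕ) (hp : p.Prime) (d : ℤ) (r : K)
    (hr : r ^ 2 = d) (hpd : ¬ (p : ℤ) ∣ d) (h : p ≠ 2 ∨ 4 ∣ d - 1) :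
    ∃ θ : 𝓞 K, (∀ τ : Gal(K/ℚ), τ r = r → τ • θ = θ) ∧
      (∀ P : Ideal (𝓞 K), P.IsPrime → (p : 𝓞 K) ∈ P → ∀ τ : Gal(K/ℚ), τ r = -r → τ • θ - θ ∉ P) := by
  have hintg : IsIntegral ℤ r := by
    apply IsIntegral.of_pow (n := 2) (by norm_num)
    rw [hr]; exact isIntegral_algebraMap (R := ℤ) (x := d)
  have hnot : ∀ P : Ideal (𝓞 K), P.IsPrime → (p : 𝓞 K) ∈ P → ∀ n : ℤ, ¬ (p : ℤ) ∣ n → (n : 𝓞 K) ∉ P := by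
    intro P hP hpP n hn hnP
    have hco : IsCoprime (p : ℤ) n := (Nat.prime_iff_prime_int.1 hp).coprime_iff_not_dvd.2 hn
    obtain ⟨u, v, huv⟩ := hco
    apply hP.ne_top
    rw [Ideal.eq_top_iff_one]
    have : (1 : 𝓞 K) = u * (p : 𝓞 K) + v * (n : 𝓞 K) := by exact_mod_cast huv.symm
    rw [this]
    exact P.add_mem (P.mul_mem_left _ hpP) (P.mul_mem_left _ hnP)
  let R : 𝓞 K := ⟨r, hintg⟩
  have hR : R ^ 2 = (d : 𝓞 K) := by
    apply RingOfIntegers.ext; push_cast; exact hr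
  have hRP : ∀ P : Ideal (𝓞 K), P.IsPrime → (p : 𝓞 K) ∈ P → R ∉ P := by
    intro P hP hpP hRP
    apply hnot P hP hpP d hpd
    rw [← hR]; exact P.pow_mem_of_mem hRP 2 (by norm_num)
  by_cases h2 : p = 2
  · have h4 : 4 ∣ d - 1 := by tauto
    obtain ⟨e, he⟩ := h4
    have hintg2 : IsIntegral ℤ ((1 + r) / 2) := by
      refine ⟨Polynomial.X ^ 2 - Polynomial.X - Polynomial.C e, ?_, ?_⟩
      · monicity!
      · simp only [Polynomial.eval₂_sub, Polynomial.eval₂_pow, Polynomial.eval₂_X, Polynomial.eval₂_C]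
        have : (d : K) - 1 = 4 * e := by exact_mod_cast he
        simp only [eq_intCast]
        linear_combination (1/4) * hr + (1/4) * this
    refine ⟨⟨(1 + r) / 2, hintg2⟩, ?_, ?_⟩
    · intro τ hτ
      apply RingOfIntegers.ext
      change τ ((1 + r) / 2) = (1 + r) / 2
      rw [map_div₀, map_add, map_one, hτ, map_ofNat]
    · intro P hP hpP τ hτ hmem
      apply hRP P hP hpP
      rw [← P.neg_mem_iff]
      convert hmem
      apply RingOfIntegers.ext
      change -r = τ ((1 + r) / 2) - (1 + r) / 2
      rw [map_div₀, map_add, map_one, hτ, map_ofNat]; ring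
  · refine ⟨R, ?_, ?_⟩
    · intro τ hτ
      apply RingOfIntegers.ext
      exact hτ
    · intro P hP hpP τ hτ hmem
      have h3 : τ • R - R = ((-2 : ℤ) : 𝓞 K) * R := by
        apply RingOfIntegers.ext
        change τ r - r = (((-2 : ℤ) : 𝓞 K) : K) * r
        rw [hτ, show ((((-2 : ℤ) : 𝓞 K)) : K) = -2 by simp; exact map_ofNat _ 2]; ring
      rw [h3] at hmem
      rcases hP.mem_or_mem hmem with h5 | h5
      · refine hnot P hP hpP (-2) ?_ h5
        intro h6
        rw [Int.dvd_neg] at h6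
        exact h2 ((Nat.prime_dvd_prime_iff_eq hp Nat.prime_two).1 (by exact_mod_cast h6))
      · exact hRP P hP hpP h5

theorem sqrt_signs {K : Type*} [Field K] [NumberField K] {d : ℤ} {r : K} (hr : r ^ 2 = d)
    (τ : Gal(K/ℚ)) : τ r = r ∨ τ r = -r := by
  apply sq_eq_sq_iff_eq_or_eq_neg.1
  rw [← map_pow, hr, map_intCast]

theorem exists_neg {K : Type*} [Field K] [NumberField K] [IsGalois ℚ K] {d : ℤ} {r : K}
    (hr : r ^ 2 = d) (hd : ¬ IsSquare d) : ∃ τ : Gal(K/ℚ), τ r = -r := by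
  by_contra! hno
  have : ∀ τ : Gal(K/ℚ), τ r = r := fun τ => (sqrt_signs hr τ).resolve_right (hno τ)
  obtain ⟨s, hs⟩ := IntermediateField.mem_bot.1 ((IsGalois.mem_bot_iff_fixed r).2 this)
  apply hd
  rw [← Rat.isSquare_intCast_iff]
  refine ⟨s, ?_⟩
  apply (algebraMap ℚ K).injective
  rw [map_mul, hs, ← sq, hr, map_intCast]

theorem fixed_mod {K : Type*} [Field K] [NumberField K]
    (P : Ideal (𝓞 K)) [hP : P.IsPrime] (hP0 : P ≠ ⊥) (φ τ : Gal(K/ℚ)) 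
    (hφ : IsArithFrobAt ℤ φ P) (hτ : τ • P = P) (θ : 𝓞 K) (hθ : φ • θ = θ) : τ • θ - θ ∈ P := by
  let q := P.under ℤ
  have hq0 : q ≠ ⊥ := fun h => hP0 (Ideal.eq_bot_of_comap_eq_bot h)
  have : q.IsMaximal := Ideal.IsPrime.isMaximal inferInstance hq0
  let := Ideal.Quotient.field q
  have : Finite (ℤ ⧸ q) := Ideal.finiteQuotientOfFreeOfNeBot q hq0
  let := Fintype.ofFinite (ℤ ⧸ q)
  have h1 := hφ θ
  simp only [MulSemiringAction.toAlgHom_apply, hθ] at h1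
  rw [← Ideal.Quotient.eq, map_pow] at h1
  have h2 : ∏ x : ℤ ⧸ q, (Polynomial.X - Polynomial.C x) =
      Polynomial.X ^ Fintype.card (ℤ ⧸ q) - Polynomial.X := by
    have hroots := FiniteField.roots_X_pow_card_sub_X (ℤ ⧸ q)
    have hdeg := FiniteField.X_pow_card_sub_X_natDegree_eq (ℤ ⧸ q)
      (Fintype.one_lt_card (α := ℤ ⧸ q))
    have := Polynomial.prod_multiset_X_sub_C_of_monic_of_roots_card_eq
      (p := Polynomial.X ^ Fintype.card (ℤ ⧸ q) - (Polynomial.X : Polynomial (ℤ ⧸ q)))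
      (Polynomial.monic_X_pow_sub (by
        rw [Polynomial.degree_X]; exact_mod_cast Fintype.one_lt_card (α := ℤ ⧸ q)))
      (by rw [hroots, hdeg]; rfl)
    rw [hroots] at this
    exact this
  have h3 := congrArg (Polynomial.eval₂ (algebraMap (ℤ ⧸ q) (𝓞 K ⧸ P)) (Ideal.Quotient.mk P θ)) h2
  rw [Polynomial.eval₂_finsetProd] at h3
  simp only [Polynomial.eval₂_sub, Polynomial.eval₂_pow, Polynomial.eval₂_X, Polynomial.eval₂_C] at h3
  rw [← Nat.card_eq_fintype_card, ← h1, sub_self, Finset.prod_eq_zero_iff] at h3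
  obtain ⟨n, -, hn⟩ := h3
  obtain ⟨n, rfl⟩ := Ideal.Quotient.mk_surjective n
  have hn' : θ - (n : 𝓞 K) ∈ P := by
    rw [← Ideal.Quotient.eq]
    rw [sub_eq_zero] at hn
    rw [hn]
    simp
  have hn2 : τ • (θ - (n : 𝓞 K)) ∈ P := by
    rw [← hτ]; exact Ideal.smul_mem_pointwise_smul _ _ _ hn'
  rw [smul_sub, show τ • (n : 𝓞 K) = (n : 𝓞 K) from by
    rw [← MulSemiringAction.toRingHom_apply, map_intCast]] at hn2
  have := P.sub_mem hn2 hn'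
  simpa using this

open IsCMField in
theorem map_conj_eq (K : Type*) [Field K] [NumberField K] [IsCMField K]
    (P : Ideal (𝓞 K)) (hc : ∀ x : 𝓞 K, ringOfIntegersComplexConj K x - x ∈ P) :
    P.map (ringOfIntegersComplexConj K) = P := by
  have h1 : ∀ x ∈ P, ringOfIntegersComplexConj K x ∈ P := by
    intro x hx
    have := P.add_mem (hc x) hx
    simpa using this
  apply le_antisymm
  · rw [Ideal.map_le_iff_le_comap]
    exact h1
  · intro x hx
    have h2 := Ideal.mem_map_of_mem (ringOfIntegersComplexConj K) (h1 x hx)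
    have h3 : ringOfIntegersComplexConj K (ringOfIntegersComplexConj K x) = x := by
      apply RingOfIntegers.ext
      exact complexConj_apply_apply K (x : K)
    rwa [h3] at h2

set_option maxHeartbeats 1000000 in
open IsCMField in
theorem core (K : Type*) [Field K] [NumberField K] [IsAbelianGalois ℚ K] [IsTotallyComplex K]
    (p : ℕ) (hp : p.Prime) (a b c : ℤ) (ra rb rc : K)
    (hra : ra ^ 2 = a) (hrb : rb ^ 2 = b) (hrc : rc ^ 2 = c)
    (hb : 0 < b) (hc : 0 < c)
    (hgen : ∀ τ : Gal(K/ℚ), τ ra = ra → τ rb = rb → τ rc = rc → τ = 1)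
    (hram : ∃ t : 𝓞 K, Ideal.span {t} ^ 2 = Ideal.span {(p : 𝓞 K)})
    (hpb : ¬ (p : ℤ) ∣ b) (hpc : ¬ (p : ℤ) ∣ c) (hp2 : p ≠ 2 ∨ (4 ∣ b - 1 ∧ 4 ∣ c - 1))
    (hsb : ¬ IsSquare b) (hsc : ¬ IsSquare c) (hsbc : ¬ IsSquare (b * c)) :
    2 ∣ Nat.card (ClassGroup (𝓞 K)) := by
  have hppos := hp.pos
  have hrbc : (rb * rc) ^ 2 = ((b * c : ℤ) : K) := by push_cast; rw [mul_pow, hrb, hrc]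
  have hpbc : ¬ (p : ℤ) ∣ b * c := fun h =>
    ((Nat.prime_iff_prime_int.1 hp).dvd_or_dvd h).elim hpb hpc
  have h4bc : p ≠ 2 ∨ 4 ∣ b * c - 1 := by
    rcases hp2 with h | ⟨⟨x, hx⟩, ⟨y, hy⟩⟩
    · left; exact h
    · right; exact ⟨4 * x * y + x + y, by
        rw [show b = 4 * x + 1 by omega, show c = 4 * y + 1 by omega]; ring⟩
  obtain ⟨θb, hb1, hb2⟩ := theta K p hp b rb hrb hpb (hp2.imp_right And.left)
  obtain ⟨θc, hc1, hc2⟩ := theta K p hp c rc hrc hpc (hp2.imp_right And.right)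
  obtain ⟨θd, hd1, hd2⟩ := theta K p hp (b * c) (rb * rc) hrbc hpbc h4bc
  let κ : Gal(K/ℚ) := (complexConj K).restrictScalars ℚ
  have hκ : ∀ (d : ℤ) (r : K), 0 < d → r ^ 2 = d → κ r = r := by
    intro d r hd hr
    rcases sqrt_signs hr κ with h | h
    · exact h
    exfalso
    let φ : K →+* ℂ := Classical.choice inferInstance
    have h1 : φ (complexConj K r) = _ := complexEmbedding_complexConj K φ r
    rw [show complexConj K r = -r from h, map_neg] at h1
    have h2 : (φ r) ^ 2 = d := by rw [← map_pow, hr, map_intCast]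
    have hre : (φ r).re = 0 := by
      have := congrArg Complex.re h1; simp at this; linarith
    have h3 := congrArg Complex.re h2
    simp [sq, hre] at h3
    have : (0 : ℝ) < d := by exact_mod_cast hd
    nlinarith [mul_self_nonneg (φ r).im]
  have hκb := hκ b rb hb hrb
  have hκc := hκ c rc hc hrc
  have hκ1 : κ ≠ 1 := by
    intro h
    apply complexConj_ne_one K
    ext x
    exact DFunLike.congr_fun h x
  have hκa : κ ra = -ra := (sqrt_signs hra κ).resolve_left fun h => hκ1 (hgen κ h hκb hκc)
  have main : ∀ P : Ideal (𝓞 K), P.IsPrime → P ≠ ⊥ → (p : 𝓞 K) ∈ P → κ ∈ P.inertia Gal(K/ℚ) := by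
    intro P hP hP0 hpP
    have hin : ∀ τ ∈ P.inertia Gal(K/ℚ), τ = 1 ∨ τ = κ := by
      intro τ hτ
      have tb : τ rb = rb := (sqrt_signs hrb τ).resolve_right fun h => hb2 P hP hpP τ h (hτ θb)
      have tc : τ rc = rc := (sqrt_signs hrc τ).resolve_right fun h => hc2 P hP hpP τ h (hτ θc)
      rcases sqrt_signs hra τ with ta | ta
      · left; exact hgen τ ta tb tc
      · right
        have : κ * τ = 1 := hgen _ (by simp [AlgEquiv.mul_apply, ta, hκa])
          (by simp [AlgEquiv.mul_apply, tb, hκb]) (by simp [AlgEquiv.mul_apply, tc, hκc])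
        have hκκ : κ * κ = 1 := hgen _ (by simp [AlgEquiv.mul_apply, hκa])
          (by simp [AlgEquiv.mul_apply, hκb]) (by simp [AlgEquiv.mul_apply, hκc])
        exact mul_left_cancel (this.trans hκκ.symm)
    let q : Ideal ℤ := Ideal.span {(p : ℤ)}
    have hq0 : q ≠ ⊥ := by simpa [q] using hp.ne_zero
    have hqp : q.IsPrime := (Ideal.span_singleton_prime (by exact_mod_cast hp.ne_zero)).2
      (Nat.prime_iff_prime_int.1 hp)
    have hqm : q.IsMaximal := hqp.isMaximal hq0
    have : P.LiesOver q := ⟨hqm.eq_of_le (Ideal.IsPrime.ne_top inferInstance) (by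
      rw [Ideal.span_singleton_le_iff_mem, Ideal.mem_comap]; simpa using hpP)⟩
    have hcard := Ideal.card_inertia_eq_ramificationIdxIn (G := Gal(K/ℚ)) q P
    have hm : q.map (algebraMap ℤ (𝓞 K)) = Ideal.span {(p : 𝓞 K)} := by
      rw [Ideal.map_span, Set.image_singleton]; simp
    have hm0 : Ideal.span {(p : 𝓞 K)} ≠ ⊥ := by simpa using hp.ne_zero
    rw [Ideal.ramificationIdxIn_eq_ramificationIdx q P Gal(K/ℚ),
      ← Ideal.ramificationIdx'_eq_ramificationIdx q P hq0,
      Ideal.IsDedekindDomain.ramificationIdx'_eq_multiplicity (hm ▸ hm0) hP, hm] at hcard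
    obtain ⟨t, ht⟩ := hram
    have hPp : Prime P := Ideal.prime_of_isPrime hP0 hP
    rw [← ht] at hcard hm0
    rw [FiniteMultiplicity.multiplicity_pow hPp (FiniteMultiplicity.of_prime_left hPp (fun h => hm0 (by rw [h]; simp)))] at hcard
    have hne : P.inertia Gal(K/ℚ) ≠ ⊥ := by
      intro h
      rw [h, Subgroup.card_bot] at hcard
      omega
    obtain ⟨⟨τ, hτ⟩, hτ1⟩ := Subgroup.ne_bot_iff_exists_ne_one.1 hne
    have hτ2 : τ ≠ 1 := fun h' => hτ1 (Subtype.ext h')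
    rw [← (hin τ hτ).resolve_left hτ2]
    exact hτ
  -- a prime above p
  have hqp : (Ideal.span {(p : ℤ)}).IsPrime :=
    (Ideal.span_singleton_prime (by exact_mod_cast hp.ne_zero)).2 (Nat.prime_iff_prime_int.1 hp)
  obtain ⟨⟨P, hP, hPover⟩⟩ :=
    (inferInstance : Nonempty ((Ideal.span {(p : ℤ)}).primesOver (𝓞 K)))
  have hpP : (p : 𝓞 K) ∈ P := by
    have h1 : (p : ℤ) ∈ P.under ℤ := by
      rw [← hPover.over]; exact Ideal.mem_span_singleton_self _
    simpa using h1
  have hP0 : P ≠ ⊥ := by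
    rintro rfl
    have : (p : 𝓞 K) = 0 := by simpa using hpP
    exact hp.ne_zero (by exact_mod_cast this)
  have hex : ∃ τ : Gal(K/ℚ), τ • P ≠ P := by
    by_contra! hall
    have : Finite (𝓞 K ⧸ P) := Ideal.finiteQuotientOfFreeOfNeBot P hP0
    obtain ⟨φ, hφ⟩ := IsArithFrobAt.exists_of_isInvariant ℤ Gal(K/ℚ) P
    have fin : ∀ (d : ℤ) (r : K) (θ : 𝓞 K), r ^ 2 = d → ¬ IsSquare d → 
      (∀ τ : Gal(K/ℚ), τ r = r → τ • θ = θ) → 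
      (∀ P : Ideal (𝓞 K), P.IsPrime → (p : 𝓞 K) ∈ P → ∀ τ : Gal(K/ℚ), τ r = -r → τ • θ - θ ∉ P) →
      φ r ≠ r := by
      intro d r θ hr hd h1 h2 hφr
      obtain ⟨τ, hτ⟩ := exists_neg hr hd
      exact h2 P hP hpP τ hτ (fixed_mod P hP0 φ τ hφ (hall τ) θ (h1 φ hφr))
    have fb := (sqrt_signs hrb φ).resolve_left (fin b rb θb hrb hsb hb1 hb2)
    have fc := (sqrt_signs hrc φ).resolve_left (fin c rc θc hrc hsc hc1 hc2)
    exact fin _ _ θd hrbc hsbc hd1 hd2 (by rw [map_mul, fb, fc]; ring)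
  obtain ⟨τ, hτ⟩ := hex
  have hQ : (τ • P).IsPrime := inferInstance
  have hpQ : (p : 𝓞 K) ∈ τ • P := by
    have := Ideal.smul_mem_pointwise_smul τ _ _ hpP
    rwa [show τ • (p : 𝓞 K) = (p : 𝓞 K) from by
      rw [← MulSemiringAction.toRingHom_apply, map_natCast]] at this
  have hQ0 : τ • P ≠ ⊥ := by
    intro h
    rw [h] at hpQ
    have : (p : 𝓞 K) = 0 := by simpa using hpQ
    exact hp.ne_zero (by exact_mod_cast this)
  have iP : ∀ x : 𝓞 K, ringOfIntegersComplexConj K x - x ∈ P := fun x => main P hP hP0 hpP x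
  have iQ : ∀ x : 𝓞 K, ringOfIntegersComplexConj K x - x ∈ τ • P := fun x =>
    main (τ • P) hQ hQ0 hpQ x
  exact two_dvd_of_primes K P (τ • P) hP0 hQ0 (Ne.symm hτ) (map_conj_eq K P iP)
    (map_conj_eq K _ iQ) (even_mult K P hP0 iP) (even_mult K (τ • P) hQ0 iQ)

theorem not_sq (q : ℕ) (hq : q.Prime) (e : ℕ) (he : Odd e) (k : ℤ) (hk : ¬ (q : ℤ) ∣ k) :
    ¬ IsSquare ((q : ℤ) ^ e * k) := by
  have : Fact q.Prime := ⟨hq⟩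
  rintro ⟨x, hx⟩
  have hk0 : k ≠ 0 := by rintro rfl; exact hk (dvd_zero _)
  have hq0 : (q : ℤ) ≠ 0 := by exact_mod_cast hq.ne_zero
  have hx0 : x ≠ 0 := by
    rintro rfl
    have : (q : ℤ) ^ e * k ≠ 0 := mul_ne_zero (pow_ne_zero _ hq0) hk0
    exact this (by simpa using hx)
  have h1 : padicValInt q ((q : ℤ) ^ e * k) = e := by
    rw [padicValInt.mul (pow_ne_zero _ hq0) hk0, padicValInt.eq_zero_of_not_dvd hk]
    rw [padicValInt, Int.natAbs_pow, Int.natAbs_natCast, padicValNat.prime_pow, add_zero]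
  rw [hx, padicValInt.mul hx0 hx0] at h1
  obtain ⟨j, hj⟩ := he
  omega

theorem pstar_pos (m : ℤ) (h : Pstar m) (hm : 0 < m) :
    ∃ q e : ℕ, q.Prime ∧ Odd e ∧ underlyingPrime m = q ∧ m = (q : ℤ) ^ e ∧
      (q ≠ 2 → 4 ∣ m - 1) := by
  rcases h with rfl | rfl | rfl | ⟨p, hp, ho, rfl⟩
  · exact ⟨2, 3, Nat.prime_two, by decide, by simp [underlyingPrime], by norm_num, by simp⟩
  · omega
  · omega
  · obtain ⟨j, rfl⟩ := ho
    have e1 : (2 * j + 1 - 1) / 2 = j := by omega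
    rw [e1] at hm ⊢
    rcases Nat.even_or_odd j with hj | hj
    · rw [hj.neg_one_pow, one_mul] at *
      refine ⟨2 * j + 1, 1, hp, by decide, ?_, by simp, fun _ => ?_⟩
      · rw [underlyingPrime, if_neg (by push_cast; omega)]
        omega
      · obtain ⟨i, rfl⟩ := hj
        exact ⟨i, by push_cast; ring⟩
    · rw [hj.neg_one_pow] at hm
      push_cast at hm
      omega

theorem pstar_neg (m : ℤ) (h : Pstar m) (hm : m < 0) :
    ∃ q : ℕ, q.Prime ∧ underlyingPrime m = q ∧ 
      ((q = 2 ∧ m = -4) ∨ (q = 2 ∧ m = -8) ∨ m = -(q : ℤ)) := by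
  rcases h with rfl | rfl | rfl | ⟨p, hp, ho, rfl⟩
  · omega
  · exact ⟨2, Nat.prime_two, by simp [underlyingPrime], by simp⟩
  · exact ⟨2, Nat.prime_two, by simp [underlyingPrime], by simp⟩
  · obtain ⟨j, rfl⟩ := ho
    have e1 : (2 * j + 1 - 1) / 2 = j := by omega
    rw [e1] at hm ⊢
    rcases Nat.even_or_odd j with hj | hj
    · rw [hj.neg_one_pow] at hm
      push_cast at hm
      omega
    · rw [hj.neg_one_pow] at *
      refine ⟨2 * j + 1, hp, ?_, by simp⟩
      rw [underlyingPrime, if_neg (by push_cast; omega)]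
      omega

theorem prime_not_dvd (p q : ℕ) (hp : p.Prime) (hq : q.Prime) (h : p ≠ q) (e : ℕ) :
    ¬ (p : ℤ) ∣ (q : ℤ) ^ e := by
  intro hd
  have : p ∣ q ^ e := by exact_mod_cast hd
  exact h ((Nat.prime_dvd_prime_iff_eq hp hq).1 (hp.dvd_of_dvd_pow this))

theorem sqrt_sq (m : ℤ) : ((m : ℂ) ^ ((1 : ℂ) / 2)) ^ 2 = m := by
  rw [← Complex.cpow_nat_mul]
  norm_num

theorem Qsqrt_normal (m : ℤ) :
    @Normal ℚ (Qsqrt m) _ _ (IntermediateField.algebra' (Qsqrt m)) := by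
  have h2 := sqrt_sq m
  rw [Qsqrt]
  set r : ℂ := (m : ℂ) ^ ((1 : ℂ) / 2)
  set f : Polynomial ℚ := Polynomial.X ^ 2 - Polynomial.C (m : ℚ) with hf
  have hf0 : f ≠ 0 := (Polynomial.monic_X_pow_sub_C _ two_ne_zero).ne_zero
  have hs : f.rootSet ℂ = {r, -r} := by
    ext x
    rw [Polynomial.mem_rootSet, and_iff_right hf0]
    simp only [hf, map_sub, map_pow, Polynomial.aeval_X,
      Polynomial.aeval_C, Set.mem_insert_iff, Set.mem_singleton_iff]
    rw [← sq_eq_sq_iff_eq_or_eq_neg, h2, sub_eq_zero]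
    simp
  have he : IntermediateField.adjoin ℚ {r} = IntermediateField.adjoin ℚ (f.rootSet ℂ) := by
    rw [hs]
    apply le_antisymm
    · exact IntermediateField.adjoin.mono _ _ _ (by simp)
    · rw [IntermediateField.adjoin_le_iff]
      have := IntermediateField.mem_adjoin_simple_self ℚ r
      rintro x (rfl | rfl)
      · exact this
      · exact neg_mem this
  rw [he]
  have h := IntermediateField.adjoin_rootSet_isSplittingField (K := ℚ) (L := ℂ) (p := f)
    (IsAlgClosed.splits _)
  exact Normal.of_isSplittingField (hFEp := h)

theorem hram_aux (K : Type*) [Field K] [NumberField K] (p : ℕ) (a : ℤ) (ra : K)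
    (hra : ra ^ 2 = a)
    (h : (p = 2 ∧ a = -4) ∨ (p = 2 ∧ a = -8) ∨ a = -(p : ℤ)) :
    ∃ t : 𝓞 K, Ideal.span {t} ^ 2 = Ideal.span {(p : 𝓞 K)} := by
  have key : ∀ (x : K) (z : ℤ), x ^ 2 = z → ∃ t : 𝓞 K, t ^ 2 = (z : 𝓞 K) := by
    intro x z hx
    have hi : IsIntegral ℤ x := by
      apply IsIntegral.of_pow (n := 2) (by norm_num)
      rw [hx]
      exact isIntegral_algebraMap (A := K) (x := z)
    obtain ⟨t, ht⟩ : ∃ t : 𝓞 K, algebraMap (𝓞 K) K t = x := ⟨⟨x, hi⟩, rfl⟩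
    refine ⟨t, ?_⟩
    apply FaithfulSMul.algebraMap_injective (𝓞 K) K
    rw [map_pow, map_intCast, ht]
    exact hx
  have fin : ∀ (t : 𝓞 K), t ^ 2 = ((-(p : ℤ) : ℤ) : 𝓞 K) →
      ∃ t : 𝓞 K, Ideal.span {t} ^ 2 = Ideal.span {(p : 𝓞 K)} := by
    intro t ht
    refine ⟨t, ?_⟩
    rw [Ideal.span_singleton_pow, ht]
    push_cast
    exact Ideal.span_singleton_neg _
  rcases h with ⟨rfl, rfl⟩ | ⟨rfl, rfl⟩ | rfl
  · obtain ⟨i, hi⟩ := key (ra / 2) (-1) (by rw [div_pow, hra]; norm_num)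
    refine ⟨1 + i, ?_⟩
    push_cast at hi
    rw [Ideal.span_singleton_pow, Ideal.span_singleton_eq_span_singleton]
    have hu : (i * -i) = 1 := by linear_combination -hi
    have hu' : (-i * i) = 1 := by linear_combination -hi
    refine ⟨⟨-i, i, hu', hu⟩, ?_⟩
    push_cast
    linear_combination (-i-2) * hi
  · obtain ⟨i, hi⟩ := key (ra / 2) (-2) (by rw [div_pow, hra]; norm_num)
    exact fin i (by simpa using hi)
  · obtain ⟨i, hi⟩ := key ra _ hra
    exact fin i hi

/-- If `a ∈ P*₋` and `b, c ∈ P*₊` have pairwise distinct underlying primes, then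
`2` divides the class number of `K = ℚ(√a, √b, √c)`. -/
theorem stmt5 (a b c : ℤ)
    (ha : Pstar a) (haneg : a < 0)
    (hb : Pstar b) (hbpos : 0 < b)
    (hc : Pstar c) (hcpos : 0 < c)
    (hab : underlyingPrime a ≠ underlyingPrime b)
    (hac : underlyingPrime a ≠ underlyingPrime c)
    (hbc : underlyingPrime b ≠ underlyingPrime c)
    (K : IntermediateField ℚ ℂ) (hK : K = Qsqrt a ⊔ Qsqrt b ⊔ Qsqrt c) :
    2 ∣ Nat.card (ClassGroup (𝓞 K)) := by
  obtain ⟨p, hp, hpa, ha'⟩ := pstar_neg a ha haneg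
  obtain ⟨q, e, hq, he, hqb, hb', hb4⟩ := pstar_pos b hb hbpos
  obtain ⟨r, f, hr, hf, hrc, hc', hc4⟩ := pstar_pos c hc hcpos
  rw [hpa, hqb] at hab
  rw [hpa, hrc] at hac
  rw [hqb, hrc] at hbc
  -- arithmetic conditions
  have hsb : ¬ IsSquare b := by
    have := not_sq q hq e he 1 (by
      intro h
      have := Int.eq_one_of_dvd_one (by positivity) h
      exact hq.one_lt.ne' (by exact_mod_cast this))
    rwa [mul_one, ← hb'] at this
  have hsc : ¬ IsSquare c := by
    have := not_sq r hr f hf 1 (by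
      intro h
      have := Int.eq_one_of_dvd_one (by positivity) h
      exact hr.one_lt.ne' (by exact_mod_cast this))
    rwa [mul_one, ← hc'] at this
  have hsbc : ¬ IsSquare (b * c) := by
    have := not_sq q hq e he c (by rw [hc']; exact prime_not_dvd q r hq hr hbc f)
    rwa [← hb'] at this
  have hpb : ¬ (p : ℤ) ∣ b := by rw [hb']; exact prime_not_dvd p q hp hq hab e
  have hpc : ¬ (p : ℤ) ∣ c := by rw [hc']; exact prime_not_dvd p r hp hr hac f
  have hp2 : p ≠ 2 ∨ (4 ∣ b - 1 ∧ 4 ∣ c - 1) := by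
    by_cases h : p = 2
    · exact Or.inr ⟨hb4 (by omega), hc4 (by omega)⟩
    · exact Or.inl h
  -- the field
  have memK : ∀ m : ℤ, Qsqrt m ≤ K → (m : ℂ) ^ ((1 : ℂ) / 2) ∈ K := fun m hm =>
    hm (IntermediateField.mem_adjoin_simple_self ℚ _)
  have ma := memK a (by rw [hK]; exact le_sup_of_le_left le_sup_left)
  have mb := memK b (by rw [hK]; exact le_sup_of_le_left le_sup_right)
  have mc := memK c (by rw [hK]; exact le_sup_right)
  have hadj : K = IntermediateField.adjoin ℚ {(a : ℂ) ^ ((1 : ℂ) / 2), (b : ℂ) ^ ((1 : ℂ) / 2),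
      (c : ℂ) ^ ((1 : ℂ) / 2)} := by
    apply le_antisymm
    · rw [hK]
      refine sup_le (sup_le ?_ ?_) ?_ <;>
        exact IntermediateField.adjoin.mono _ _ _ (by simp)
    · rw [IntermediateField.adjoin_le_iff]
      rintro x (rfl | rfl | rfl)
      exacts [ma, mb, mc]
  have hintg : ∀ m : ℤ, FiniteDimensional ℚ (Qsqrt m) := by
    intro m
    apply IntermediateField.adjoin.finiteDimensional
    apply IsIntegral.of_pow (n := 2) (by norm_num)
    rw [sqrt_sq]
    have := isIntegral_algebraMap (R := ℚ) (A := ℂ) (x := (m : ℚ))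
    rwa [map_intCast] at this
  have := hintg a
  have := hintg b
  have := hintg c
  have hfd : FiniteDimensional ℚ K := by rw [hK]; infer_instance
  have hno : Normal ℚ K := by
    have h1 := @IntermediateField.normal_sup ℚ ℂ _ _ _ (Qsqrt a) (Qsqrt b)
      (Qsqrt_normal a) (Qsqrt_normal b)
    have h2 := @IntermediateField.normal_sup ℚ ℂ _ _ _ (Qsqrt a ⊔ Qsqrt b) (Qsqrt c)
      h1 (Qsqrt_normal c)
    rw [← hK] at h2
    exact h2
  have : NumberField K := { to_charZero := inferInstance, to_finiteDimensional := hfd }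
  have hra : (⟨_, ma⟩ : K) ^ 2 = a := Subtype.ext (by simp)
  have hrb : (⟨_, mb⟩ : K) ^ 2 = b := Subtype.ext (by simp)
  have hrc : (⟨_, mc⟩ : K) ^ 2 = c := Subtype.ext (by simp)
  have hext : ∀ σ τ : Gal(K/ℚ), σ ⟨_, ma⟩ = τ ⟨_, ma⟩ → σ ⟨_, mb⟩ = τ ⟨_, mb⟩ →
      σ ⟨_, mc⟩ = τ ⟨_, mc⟩ → σ = τ := by
    intro σ τ h1 h2 h3
    have : (σ : K →ₐ[ℚ] K) = (τ : K →ₐ[ℚ] K) := by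
      refine IntermediateField.algHom_ext_of_eq_adjoin (F := ℚ) (E := ℂ) (K := K) hadj ?_
      rintro x (rfl | rfl | rfl)
      exacts [h1, h2, h3]
    exact AlgEquiv.coe_toAlgHom_injective this
  have hcomm : ∀ {d : ℤ} {x : K} (hx : x ^ 2 = d) (σ τ : Gal(K/ℚ)), (σ * τ) x = (τ * σ) x := by
    intro d x hx σ τ
    rw [AlgEquiv.mul_apply, AlgEquiv.mul_apply]
    rcases sqrt_signs hx σ with h | h <;> rcases sqrt_signs hx τ with h' | h' <;>
      simp [h, h']
  have : IsGalois ℚ K := ⟨⟩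
  have : IsAbelianGalois ℚ K :=
    { is_comm := ⟨fun σ τ => hext _ _ (hcomm hra σ τ) (hcomm hrb σ τ) (hcomm hrc σ τ)⟩ }
  have : IsTotallyComplex K := by
    refine ⟨fun v => ?_⟩
    rw [← InfinitePlace.not_isReal_iff_isComplex]
    intro hv
    have h1 := congrArg (InfinitePlace.embedding_of_isReal hv) hra
    rw [map_pow, map_intCast] at h1
    have h2 : (a : ℝ) < 0 := by exact_mod_cast haneg
    nlinarith [sq_nonneg (InfinitePlace.embedding_of_isReal hv ⟨_, ma⟩)]
  refine core K p hp a b c ⟨_, ma⟩ ⟨_, mb⟩ ⟨_, mc⟩ hra hrb hrc hbpos hcpos ?_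
    (hram_aux K p a _ hra ha') hpb hpc hp2 hsb hsc hsbc
  intro τ h1 h2 h3
  exact hext τ 1 h1 h2 h3
end

section
/- Fix a positive odd integer u. Let K be an imaginary biquadratic field such that the exponent E(K) of Cl(K) divides u. Then K = ℚ(√p₁*, √p₂*) for some p₁* ∈ P*₋ and p₂* ∈ P* with E(ℚ(√p₁*)) dividing u, and moreover: if p₂* < 0 then E(ℚ(√p₂*)) divides u, while if p₂* > 0 then E(ℚ(√(p₁*p₂*))) divides 2u. -/
open NumberField

/-- An `n`-quadratic field realized as a subfield of `ℂ`. -/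
def IsNQuadratic (n : ℕ) (K : IntermediateField ℚ ℂ) : Prop :=
  FiniteDimensional ℚ K ∧ IsGalois ℚ K ∧
    Nonempty ((K ≃ₐ[ℚ] K) ≃* (Fin n → Multiplicative (ZMod 2)))

/-- A subfield of `ℂ` is imaginary if it is not contained in `ℝ`. -/
def IsImaginary (K : IntermediateField ℚ ℂ) : Prop :=
  ∃ x : K, (x : ℂ).im ≠ 0

/-- The exponent `E(K)` of the class group of a subfield `K` of `ℂ`. -/
noncomputable def Efield (K : IntermediateField ℚ ℂ) : ℕ :=
  Monoid.exponent (ClassGroup (𝓞 K))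

open NumberTheorySymbols

lemma jac_modEq (e : ℤ) {b c : ℕ} (hb : Odd b) (hc : Odd c) {M : ℕ} (hM : 4 * e.natAbs ∣ M)
    (h : b ≡ c [MOD M]) : J(e | b) = J(e | c) := by
  rw [jacobiSym.mod_right e hb, jacobiSym.mod_right e hc, h.of_dvd hM]

/-- A nonzero nonsquare integer has Jacobi symbol `-1` at some odd modulus. -/
lemma exists_jac_neg_one (e : ℤ) (he : e ≠ 0) (hns : ¬ IsSquare e) :
    ∃ g : ℕ, Odd g ∧ J(e | g) = -1 := by
  by_cases hp : ∃ p : ℕ, p.Prime ∧ Odd (e.natAbs.factorization p)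
  · obtain ⟨p, hp, hk⟩ := hp
    set k := e.natAbs.factorization p with hkdef
    have hn0 : e.natAbs ≠ 0 := Int.natAbs_ne_zero.mpr he
    obtain ⟨r, hr⟩ : ((p:ℤ) ^ k) ∣ e := by
      have := Nat.ordProj_dvd e.natAbs p
      rw [← Int.natCast_dvd] at this
      simpa using this
    have hpr : p.Coprime r.natAbs := by
      rw [Nat.Prime.coprime_iff_not_dvd hp]
      intro hd
      have h1 : p ^ (k+1) ∣ e.natAbs := by
        rw [hr, Int.natAbs_mul, pow_succ, Int.natAbs_pow, Int.natAbs_natCast]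
        exact mul_dvd_mul_left _ hd
      exact Nat.pow_succ_factorization_not_dvd hn0 hp h1
    have hr0 : r ≠ 0 := by rintro rfl; simp at hr; exact he hr
    rcases hp.eq_two_or_odd' with h2 | hodd
    · subst h2
      have hcop : Nat.Coprime 8 r.natAbs := by
        have : (8:ℕ) = 2^3 := by norm_num
        rw [this]; exact Nat.Coprime.pow_left 3 hpr
      obtain ⟨g, hg1, hg2⟩ := Nat.chineseRemainder hcop 5 1
      have hg8 : g % 8 = 5 := hg1
      have hgo : Odd g := by rw [Nat.odd_iff]; omega
      refine ⟨g, hgo, ?_⟩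
      have hJ2 : J((2:ℤ) | g) = -1 := by
        rw [jacobiSym.at_two hgo, ZMod.χ₈_nat_mod_eight, hg8]; rfl
      have hro : Odd r.natAbs := by
        exact (Nat.coprime_two_left.mp hpr)
      have hJm1 : J(-1 | g) = 1 := by
        rw [jacobiSym.at_neg_one hgo, ZMod.χ₄_nat_one_mod_four (by omega)]
      have hJr : J((r.natAbs:ℤ) | g) = 1 := by
        rw [jacobiSym.quadratic_reciprocity_one_mod_four' hro (by omega)]
        rw [jacobiSym.mod_left, show ((g:ℤ) % (r.natAbs:ℕ)) = (1:ℤ) % (r.natAbs:ℕ) by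
          exact_mod_cast hg2, ← jacobiSym.mod_left, jacobiSym.one_left]
      have hJr' : J(r | g) = 1 := by
        rcases Int.natAbs_eq r with h | h
        · rw [h]; exact hJr
        · rw [h, jacobiSym.neg _ hgo, hJr]
          rw [ZMod.χ₄_nat_one_mod_four (by omega)]; rfl
      rw [hr, jacobiSym.mul_left, jacobiSym.pow_left, hJr', mul_one]
      push_cast
      rw [hJ2, hk.neg_one_pow]
    · have := Fact.mk hp
      have hp2 : ringChar (ZMod p) ≠ 2 := by
        rw [ZMod.ringChar_zmod_n]; rintro rfl; exact absurd hodd (by decide)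
      obtain ⟨x, hx⟩ := quadraticChar_exists_neg_one hp2
      have hcop : Nat.Coprime p (4 * r.natAbs) := by
        refine Nat.Coprime.mul_right ?_ hpr
        have : (4:ℕ) = 2^2 := by norm_num
        rw [this]; exact Nat.Coprime.pow_right 2 (Nat.coprime_two_right.mpr hodd)
      obtain ⟨g, hg1, hg2⟩ := Nat.chineseRemainder hcop x.val 1
      have hg4 : g % 4 = 1 := (Nat.ModEq.of_mul_right _ hg2 : g ≡ 1 [MOD 4])
      have hgo : Odd g := by rw [Nat.odd_iff]; omega
      refine ⟨g, hgo, ?_⟩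
      have hJr : J(r | g) = 1 := by
        rw [jac_modEq r hgo odd_one dvd_rfl hg2, jacobiSym.one_right]
      have hJp : J((p:ℤ) | g) = -1 := by
        rw [jacobiSym.quadratic_reciprocity_one_mod_four' hodd hg4]
        rw [← jacobiSym.legendreSym.to_jacobiSym]
        have : ((g:ℕ) : ZMod p) = x := by
          rw [(ZMod.natCast_eq_natCast_iff _ _ _).mpr hg1]; simp
        rw [legendreSym, Int.cast_natCast, this, hx]
      rw [hr, jacobiSym.mul_left, jacobiSym.pow_left, hJr, mul_one, hJp, hk.neg_one_pow]
  · push Not at hp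
    have hsq : IsSquare e.natAbs := by
      have : ∃ t : ℕ, e.natAbs = t ^ 2 := by
        refine ⟨∏ p ∈ e.natAbs.primeFactors, p ^ (e.natAbs.factorization p / 2), ?_⟩
        conv_lhs => rw [← Nat.prod_factorization_pow_eq_self (Int.natAbs_ne_zero.mpr he)]
        rw [Finsupp.prod, ← Finset.prod_pow]
        refine Finset.prod_congr rfl fun p hpm => ?_
        have hpp : p.Prime := Nat.prime_of_mem_primeFactors hpm
        have := hp p hpp
        rw [Nat.not_odd_iff_even] at this
        rw [← pow_mul, Nat.div_mul_cancel this.two_dvd]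
      obtain ⟨t, ht⟩ := this
      exact ⟨t, by rw [ht, sq]⟩
    obtain ⟨t, ht⟩ := hsq
    have hneg : e = -((t:ℤ) * t) := by
      rcases Int.natAbs_eq e with h | h
      · exact absurd ⟨(t:ℤ), by rw [h, ht]; push_cast; rfl⟩ hns
      · rw [h, ht]; push_cast; rfl
    have ht0 : 0 < t := by
      rcases Nat.eq_zero_or_pos t with h | h
      · subst h; simp at hneg; exact absurd hneg he
      · exact h
    refine ⟨4 * (t * t) - 1, ?_, ?_⟩
    · rw [Nat.odd_iff]
      have := Nat.mul_pos ht0 ht0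
      omega
    · have hpos := Nat.mul_pos ht0 ht0
      have hgo : Odd (4 * (t * t) - 1) := by rw [Nat.odd_iff]; omega
      rw [hneg, jacobiSym.neg _ hgo, ZMod.χ₄_nat_three_mod_four (by omega)]
      have hcop : ((t:ℤ) * t).gcd ((4 * (t * t) - 1 : ℕ):ℤ) = 1 := by
        rw [← Int.isCoprime_iff_gcd_eq_one]
        refine ⟨4, -1, ?_⟩
        rw [Nat.cast_sub (by omega)]
        push_cast; ring
      have hc' : ((t:ℤ)).gcd ((4 * (t * t) - 1 : ℕ):ℤ) = 1 := by
        rw [← Int.isCoprime_iff_gcd_eq_one] at hcop ⊢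
        exact hcop.of_mul_left_left
      rw [jacobiSym.mul_left, ← sq, jacobiSym.sq_one hc']
      rfl

noncomputable def psiHom (M : ℕ) (e : ℤ) (hM : 4 * e.natAbs ∣ M) (he : e ≠ 0) (hM0 : M ≠ 0) :
    (ZMod M)ˣ →* ℤ where
  toFun g := J(e | (g : ZMod M).val)
  map_one' := by
    have : NeZero M := ⟨hM0⟩
    have h1 : M ≠ 1 := by rintro rfl; have := Nat.le_of_dvd one_pos hM; have := Int.natAbs_pos.mpr he; omega
    have : Fact (1 < M) := ⟨by omega⟩
    rw [Units.val_one, ZMod.val_one, jacobiSym.one_right]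
  map_mul' a b := by
    have : NeZero M := ⟨hM0⟩
    have h2 : 2 ∣ M := (Dvd.intro (2 * e.natAbs) (by ring)).trans hM
    have hodd : ∀ g : (ZMod M)ˣ, Odd (g : ZMod M).val := fun g => by
      have := ZMod.val_coe_unit_coprime g
      exact Nat.coprime_two_right.mp (Nat.Coprime.coprime_dvd_right h2 this)
    rw [← jacobiSym.mul_right' _ (hodd a).pos.ne' (hodd b).pos.ne']
    refine jac_modEq e (hodd _) ((hodd a).mul (hodd b)) hM ?_
    rw [Units.val_mul, ZMod.val_mul]
    exact Nat.mod_modEq _ _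

lemma psi_unit {M : ℕ} (h2 : 2 ∣ M) (g : (ZMod M)ˣ) : Odd (g : ZMod M).val :=
  Nat.coprime_two_right.mp (Nat.Coprime.coprime_dvd_right h2 (ZMod.val_coe_unit_coprime g))

lemma psi_sum (M : ℕ) [NeZero M] (e : ℤ) (hM : 4 * e.natAbs ∣ M) (he : e ≠ 0) (hM0 : M ≠ 0)
    (hns : ¬ IsSquare e) : ∑ g, psiHom M e hM he hM0 g = 0 := by
  apply sum_hom_units_eq_zero
  intro h1
  obtain ⟨g, hgo, hg⟩ := exists_jac_neg_one e he hns
  have hcop : Nat.Coprime g (4 * e.natAbs) := by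
    refine Nat.Coprime.mul_right ?_ ?_
    · have : (4:ℕ) = 2^2 := by norm_num
      rw [this]; exact Nat.Coprime.pow_right 2 (Nat.coprime_two_right.mpr hgo)
    · have hJ0 : J(e | g) ≠ 0 := by rw [hg]; norm_num
      have : NeZero g := ⟨hgo.pos.ne'⟩
      have h3 := mt (jacobiSym.eq_zero_iff_not_coprime (a := e) (b := g)).mpr hJ0
      rw [not_not, Int.gcd_eq_natAbs] at h3
      simpa using (Nat.Coprime.symm h3)
  -- lift to a unit of ZMod M
  obtain ⟨w, hw⟩ := ZMod.unitsMap_surjective hM (ZMod.unitOfCoprime g hcop)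
  have hval : (w : ZMod M).val ≡ g [MOD 4 * e.natAbs] := by
    rw [← ZMod.natCast_eq_natCast_iff]
    have := congrArg (Units.val) hw
    rw [ZMod.coe_unitOfCoprime, ZMod.unitsMap_val] at this
    rw [← this, ZMod.natCast_val]
  have h2 : 2 ∣ M := (Dvd.intro (2 * e.natAbs) (by ring)).trans hM
  have := DFunLike.congr_fun h1 w
  change J(e | (w : ZMod M).val) = 1 at this
  rw [jac_modEq e (psi_unit h2 w) hgo dvd_rfl hval, hg] at this
  norm_num at this

lemma exists_prime_split (a b c : ℤ) (ha : a ≠ 0) (hb : b ≠ 0) (hc : c ≠ 0)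
    (h1 : ¬ IsSquare c) (h2 : ¬ IsSquare (c * a)) (h3 : ¬ IsSquare (c * b))
    (h4 : ¬ IsSquare (c * a * b)) (B : ℕ) :
    ∃ q : ℕ, q.Prime ∧ B < q ∧ J(a | q) = 1 ∧ J(b | q) = 1 ∧ J(c | q) = -1 := by
  set M := 4 * (a * b * c).natAbs with hMdef
  have hM0 : M ≠ 0 := by simp [hMdef, ha, hb, hc]
  have : NeZero M := ⟨hM0⟩
  have hdvd : ∀ e : ℤ, e ∣ a * b * c → 4 * e.natAbs ∣ M := fun e he =>
    mul_dvd_mul_left 4 (Int.natAbs_dvd_natAbs.mpr he)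
  have hda := hdvd a ⟨b * c, by ring⟩
  have hdb := hdvd b ⟨a * c, by ring⟩
  have hdc := hdvd c ⟨a * b, by ring⟩
  have hdab := hdvd (a * b) ⟨c, by ring⟩
  have hdca := hdvd (c * a) ⟨b, by ring⟩
  have hdcb := hdvd (c * b) ⟨a, by ring⟩
  have hdcab := hdvd (c * a * b) ⟨1, by ring⟩
  have h2M : 2 ∣ M := ⟨2 * (a * b * c).natAbs, by rw [hMdef]; ring⟩
  let A := psiHom M a hda ha hM0
  let Bb := psiHom M b hdb hb hM0
  let C := psiHom M c hdc hc hM0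
  have sC := psi_sum M c hdc hc hM0 h1
  have sCA := psi_sum M (c * a) hdca (mul_ne_zero hc ha) hM0 h2
  have sCB := psi_sum M (c * b) hdcb (mul_ne_zero hc hb) hM0 h3
  have sCAB := psi_sum M (c * a * b) hdcab (mul_ne_zero (mul_ne_zero hc ha) hb) hM0 h4
  have key : ∃ g : (ZMod M)ˣ, A g = 1 ∧ Bb g = 1 ∧ C g = -1 := by
    by_contra hcon
    push Not at hcon
    have tri : ∀ (f : (ZMod M)ˣ →* ℤ) g, f g = 1 ∨ f g = -1 := fun f g =>
      Int.isUnit_iff.mp ((Group.isUnit g).map f)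
    have hz : ∀ g, (1 + A g) * (1 + Bb g) * (1 - C g) = 0 := by
      intro g
      rcases tri A g with h | h <;> rcases tri Bb g with h' | h' <;> rcases tri C g with h'' | h'' <;>
        simp [h, h', h'']
      exact hcon g h h' h''
    have hs : ∑ g, (1 + A g) * (1 + Bb g) = 0 := by
      have hx : ∀ g, (1 + A g) * (1 + Bb g) = (1 + A g) * (1 + Bb g) * (1 - C g) +
          (psiHom M c hdc hc hM0 g + psiHom M (c * a) hdca (mul_ne_zero hc ha) hM0 g +
           psiHom M (c * b) hdcb (mul_ne_zero hc hb) hM0 g +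
           psiHom M (c * a * b) hdcab (mul_ne_zero (mul_ne_zero hc ha) hb) hM0 g) := by
        intro g
        have e1 : psiHom M (c * a) hdca (mul_ne_zero hc ha) hM0 g = C g * A g :=
          jacobiSym.mul_left _ _ _
        have e2 : psiHom M (c * b) hdcb (mul_ne_zero hc hb) hM0 g = C g * Bb g :=
          jacobiSym.mul_left _ _ _
        have e3 : psiHom M (c * a * b) hdcab (mul_ne_zero (mul_ne_zero hc ha) hb) hM0 g
            = C g * A g * Bb g := by
          change J(c * a * b | _) = _
          rw [jacobiSym.mul_left, jacobiSym.mul_left]; rfl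
        rw [e1, e2, e3]
        change _ = _ + (C g + _ + _ + _)
        ring
      rw [Finset.sum_congr rfl fun g _ => (hx g).trans (by rw [hz g, zero_add])]
      rw [Finset.sum_add_distrib, Finset.sum_add_distrib, Finset.sum_add_distrib, sC, sCA, sCB, sCAB]
      rfl
    have hpos : (0:ℤ) < ∑ g, (1 + A g) * (1 + Bb g) := by
      refine Finset.sum_pos' (fun g _ => ?_) ⟨1, Finset.mem_univ _, by simp⟩
      rcases tri A g with h | h <;> rcases tri Bb g with h' | h' <;> simp [h, h']
    omega
  obtain ⟨g, hA, hB, hC⟩ := key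
  obtain ⟨q, hqB, hq, hqg⟩ := Nat.forall_exists_prime_gt_and_eq_mod g.isUnit (max B 2)
  have hqo : Odd q := hq.odd_of_ne_two (by have := le_max_right B 2; omega)
  have hmod : q ≡ (g : ZMod M).val [MOD M] := by
    rw [← ZMod.natCast_eq_natCast_iff, hqg]; simp
  have tr : ∀ e : ℤ, 4 * e.natAbs ∣ M → J(e | q) = J(e | (g : ZMod M).val) := fun e he =>
    jac_modEq e hqo (psi_unit h2M g) he hmod
  exact ⟨q, hq, lt_of_le_of_lt (le_max_left _ _) hqB, (tr a hda).trans hA, (tr b hdb).trans hB,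
    (tr c hdc).trans hC⟩

lemma rat_not_sq {m : ℤ} (hm : ¬ IsSquare m) (r : ℚ) : r ^ 2 ≠ (m : ℚ) := by
  intro h
  apply hm
  rw [← Rat.isSquare_intCast_iff]
  exact ⟨r, by rw [← h, sq]⟩

lemma rat_int_of_isIntegral {x : ℚ} (h : IsIntegral ℤ x) : ∃ n : ℤ, x = n := by
  obtain ⟨n, hn⟩ := IsIntegrallyClosed.isIntegral_iff.mp h
  exact ⟨n, by rw [← hn]; rfl⟩

/-- Norms from `K` are norms from any quadratic subfield. -/
lemma norm_form {K : Type*} [Field K] [NumberField K] {m : ℤ} (hm : ¬ IsSquare m) (r : K)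
    (hr : r ^ 2 = (m : K)) (z : K) (hz : IsIntegral ℤ z) :
    ∃ x y : ℚ, Algebra.norm ℚ z = x ^ 2 - m * y ^ 2 ∧ ∃ A : ℤ, 2 * x = A := by
  have : Fact (∀ s : ℚ, s ^ 2 ≠ (m : ℚ) + 0 * s) := ⟨fun s => by
    simpa using rat_not_sq hm s⟩
  let k := QuadraticAlgebra ℚ (m : ℚ) 0
  let f : k →ₐ[ℚ] K := QuadraticAlgebra.lift ⟨r, by
    rw [← sq, hr, zero_smul, add_zero, Algebra.smul_def, mul_one]; simp⟩
  let : Algebra k K := f.toRingHom.toAlgebra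
  have : IsScalarTower ℚ k K := IsScalarTower.of_algebraMap_eq fun x => (f.commutes x).symm
  have : FiniteDimensional k K := FiniteDimensional.right ℚ k K
  have hn : Algebra.norm ℚ z = Algebra.norm ℚ (Algebra.norm k z) := (Algebra.norm_norm).symm
  set w : k := Algebra.norm k z with hw
  have hwi : IsIntegral ℤ w := Algebra.isIntegral_norm k hz
  have hnw : Algebra.norm ℚ w = w.norm := by
    rw [← QuadraticAlgebra.det_toLinearMap_eq_norm, Algebra.norm_apply]
    rfl
  refine ⟨w.re, w.im, ?_, ?_⟩
  · rw [hn, hnw, QuadraticAlgebra.norm_def]; ring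
  · have hs : IsIntegral ℤ (star w) :=
      hwi.map (starRingEnd k).toIntAlgHom
    have hadd := hwi.add hs
    have h2 : w + star w = algebraMap ℚ k (2 * w.re) := by
      have h3 := QuadraticAlgebra.algebraMap_trace_eq_add_star (z := w)
      rw [QuadraticAlgebra.trace_def, zero_mul, add_zero] at h3
      exact h3.symm
    rw [h2] at hadd
    exact rat_int_of_isIntegral ((isIntegral_algebraMap_iff (algebraMap ℚ k).injective).mp hadd)

lemma classGroup_descent {k K : Type*} [Field k] [NumberField k] [Field K] [NumberField K]
    [Algebra k K] (hd : Module.finrank k K = 2) {u : ℕ}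
    (hE : Monoid.exponent (ClassGroup (𝓞 K)) ∣ u) :
    Monoid.exponent (ClassGroup (𝓞 k)) ∣ 2 * u := by
  rw [Monoid.exponent_dvd_iff_forall_pow_eq_one] at hE ⊢
  intro c
  obtain ⟨I, rfl⟩ := ClassGroup.mk0_surjective c
  have hI0 : (I : Ideal (𝓞 k)) ≠ ⊥ := nonZeroDivisors.coe_ne_zero I
  have hJ0 : (I : Ideal (𝓞 k)).map (algebraMap (𝓞 k) (𝓞 K)) ≠ ⊥ := by
    rwa [Ne, Ideal.map_eq_bot_iff_of_injective (FaithfulSMul.algebraMap_injective _ _)]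
  let J : nonZeroDivisors (Ideal (𝓞 K)) := ⟨_, mem_nonZeroDivisors_of_ne_zero hJ0⟩
  have h1 := hE (ClassGroup.mk0 J)
  rw [← map_pow, ClassGroup.mk0_eq_one_iff] at h1
  rw [← map_pow, ClassGroup.mk0_eq_one_iff]
  obtain ⟨⟨α, hα⟩⟩ := h1
  have hα' : ((I : Ideal (𝓞 k)).map (algebraMap (𝓞 k) (𝓞 K))) ^ u = Ideal.span {α} := by
    simpa [J] using hα
  have h3 := congrArg (Ideal.relNorm (𝓞 k)) hα'
  have hfr : Module.finrank (𝓞 k) (𝓞 K) = 2 := by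
    rw [← hd]; exact (IsFractionRing.finrank_eq (𝓞 k) k (𝓞 K) K).symm
  rw [map_pow, Ideal.relNorm_algebraMap, Ideal.relNorm_singleton, hfr, ← pow_mul] at h3
  exact ⟨⟨_, by simpa using h3⟩⟩

/-- A prime splitting completely in `ℚ(s,t)` has a prime of norm `q` above it. -/
lemma exists_prime_norm {K : Type*} [Field K] [NumberField K] [IsGalois ℚ K] {a b : ℤ} (s t : K)
    (hs : s ^ 2 = (a : K)) (ht : t ^ 2 = (b : K))
    (hgen : ∀ σ : K ≃ₐ[ℚ] K, σ s = s → σ t = t → σ = 1)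
    {q : ℕ} (hq : q.Prime) (hq2 : q ≠ 2) (ha : J(a | q) = 1) (hb : J(b | q) = 1) :
    ∃ P : Ideal (𝓞 K), Ideal.absNorm P = q := by
  have := Fact.mk hq
  obtain ⟨P, hPp, hPo⟩ : ∃ P : Ideal (𝓞 K), P.IsPrime ∧ P.under ℤ = Ideal.span {(q:ℤ)} := by
    have : (Ideal.span {(q:ℤ)}).IsPrime := by
      rw [Ideal.span_singleton_prime (by exact_mod_cast hq.ne_zero)]
      exact Nat.prime_iff_prime_int.mp hq
    obtain ⟨P, -, hP, hP'⟩ := Ideal.exists_ideal_over_prime_of_isIntegral (S := 𝓞 K)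
      (Ideal.span {(q:ℤ)}) ⊥ (by
        rw [← RingHom.ker_eq_comap_bot, (RingHom.injective_iff_ker_eq_bot _).mp
          (FaithfulSMul.algebraMap_injective ℤ (𝓞 K))]; exact bot_le)
    exact ⟨P, hP, hP'⟩
  have hP0 : P ≠ ⊥ := by
    rintro rfl
    have hqm : (q:ℤ) ∈ (⊥ : Ideal (𝓞 K)).under ℤ := by
      rw [hPo]; exact Ideal.mem_span_singleton_self _
    rw [Ideal.under, Ideal.mem_comap, Ideal.mem_bot] at hqm
    simp at hqm
    exact hq.ne_zero hqm
  have hmemiff : ∀ n : ℤ, (n : 𝓞 K) ∈ P ↔ (q:ℤ) ∣ n := by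
    intro n
    rw [← Ideal.mem_span_singleton, ← hPo, Ideal.under, Ideal.mem_comap]
    simp
  have : Finite (𝓞 K ⧸ P) := Ideal.finiteQuotientOfFreeOfNeBot P hP0
  have hPm : P.IsMaximal := hPp.isMaximal hP0
  have : Algebra.IsInvariant ℤ (𝓞 K) (K ≃ₐ[ℚ] K) := inferInstance
  obtain ⟨σ, hσ⟩ := IsArithFrobAt.exists_of_isInvariant ℤ (K ≃ₐ[ℚ] K) P
  have hcard : Nat.card (ℤ ⧸ P.under ℤ) = q := by
    rw [hPo, ← Submodule.cardQuot_apply, ← Ideal.absNorm_apply, Ideal.absNorm_span_singleton]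
    simp
  have hfrob : ∀ x : 𝓞 K, σ • x - x ^ q ∈ P := by
    intro x
    have := hσ x
    rw [hcard] at this
    exact this
  have hfix : ∀ (e : ℤ) (v : K), v ^ 2 = (e : K) → J(e | q) = 1 → σ v = v := by
    intro e v hv he
    have hvi : IsIntegral ℤ v := by
      refine IsIntegral.of_pow two_pos ?_
      rw [hv]; exact isIntegral_algebraMap (R := ℤ) (A := K) (x := e)
    let V : 𝓞 K := ⟨v, hvi⟩
    have hV : V ^ 2 = (e : 𝓞 K) := by
      ext; simp only [map_pow, map_intCast]; exact hv
    rw [← jacobiSym.legendreSym.to_jacobiSym] at he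
    have hqe : ((e : ℤ) : ZMod q) ≠ 0 := by
      intro h0; rw [(legendreSym.eq_zero_iff q e).mpr h0] at he; exact zero_ne_one he
    obtain ⟨ρ, hρ⟩ := (legendreSym.eq_one_iff q hqe).mp he
    have hρ' : (q:ℤ) ∣ e - (ρ.val:ℤ) ^ 2 := by
      rw [← ZMod.intCast_zmod_eq_zero_iff_dvd]
      push_cast
      rw [hρ]; simp [sq]
    have hprod : (V - (ρ.val : ℤ)) * (V + (ρ.val:ℤ)) ∈ P := by
      have : (V - (ρ.val : ℤ)) * (V + (ρ.val:ℤ)) = ((e - (ρ.val:ℤ) ^ 2 : ℤ) : 𝓞 K) := by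
        push_cast; rw [← hV]; ring
      rw [this, hmemiff]; exact hρ'
    have hn : ∃ n : ℤ, V - (n : 𝓞 K) ∈ P := by
      rcases hPp.mem_or_mem hprod with h | h
      · exact ⟨_, h⟩
      · exact ⟨-(ρ.val:ℤ), by push_cast at h ⊢; simpa using h⟩
    obtain ⟨n, hn⟩ := hn
    have hpow : V ^ q - V ∈ P := by
      have h1 : V ^ q - (n : 𝓞 K) ^ q ∈ P := by
        obtain ⟨w, hw⟩ := sub_dvd_pow_sub_pow V (n : 𝓞 K) q
        rw [hw]; exact P.mul_mem_right _ hn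
      have h2 : (n : 𝓞 K) ^ q - n ∈ P := by
        have : (n : 𝓞 K) ^ q - n = ((n ^ q - n : ℤ) : 𝓞 K) := by push_cast; ring
        rw [this, hmemiff, ← ZMod.intCast_zmod_eq_zero_iff_dvd]
        push_cast; rw [ZMod.pow_card, sub_self]
      have : V ^ q - V = (V ^ q - (n : 𝓞 K) ^ q) + ((n : 𝓞 K) ^ q - n) - (V - n) := by ring
      rw [this]; exact P.sub_mem (P.add_mem h1 h2) hn
    have hsV : σ • V - V ∈ P := by
      have : σ • V - V = (σ • V - V ^ q) + (V ^ q - V) := by ring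
      rw [this]; exact P.add_mem (hfrob V) hpow
    have hσv : σ v = v ∨ σ v = -v := by
      apply sq_eq_sq_iff_eq_or_eq_neg.mp
      rw [← map_pow, hv, map_intCast]
    rcases hσv with h | h
    · exact h
    · exfalso
      have hneg : σ • V = -V := by
        apply RingOfIntegers.ext; exact h
      rw [hneg] at hsV
      have h4 : ((4 * e : ℤ) : 𝓞 K) ∈ P := by
        have : ((4 * e : ℤ) : 𝓞 K) = (-V - V) * (-2 * V) := by push_cast; rw [← hV]; ring
        rw [this]; exact P.mul_mem_right _ hsV
      rw [hmemiff] at h4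
      have hqp : Prime (q:ℤ) := Nat.prime_iff_prime_int.mp hq
      rcases hqp.dvd_or_dvd h4 with h | h
      · have : q ∣ 2 ^ 2 := by exact_mod_cast h
        exact hq2 ((Nat.prime_dvd_prime_iff_eq hq Nat.prime_two).mp (hq.dvd_of_dvd_pow this))
      · exact hqe ((ZMod.intCast_zmod_eq_zero_iff_dvd _ _).mpr h)
  have hσ1 := hgen σ (hfix a s hs ha) (hfix b t ht hb)
  refine ⟨P, ?_⟩
  rw [Ideal.absNorm_apply, Submodule.cardQuot_apply]
  let := Ideal.Quotient.field P
  have := Fintype.ofFinite (𝓞 K ⧸ P)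
  have hall : ∀ x : 𝓞 K ⧸ P, x ^ q = x := by
    intro x
    obtain ⟨x, rfl⟩ := Ideal.Quotient.mk_surjective x
    have := hfrob x
    rw [hσ1, one_smul, ← Ideal.Quotient.eq] at this
    rw [← map_pow, ← this]
  rw [Nat.card_eq_fintype_card]
  apply le_antisymm
  · have h := FiniteField.X_pow_card_sub_X_natDegree_eq (𝓞 K ⧸ P) hq.one_lt
    have h0 := FiniteField.X_pow_card_sub_X_ne_zero (𝓞 K ⧸ P) hq.one_lt
    rw [← h, ← Finset.card_univ]
    refine Polynomial.card_le_degree_of_subset_roots (p := _) ?_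
    intro x hx
    rw [Polynomial.mem_roots h0]
    simp [hall x]
  · have hchar : CharP (𝓞 K ⧸ P) q := by
      refine (CharP.charP_iff_prime_eq_zero hq).mpr ?_
      have := (hmemiff q).mpr dvd_rfl
      rw [← Ideal.Quotient.eq_zero_iff_mem] at this
      simpa using this
    obtain ⟨n, hqp, hn⟩ := FiniteField.card (𝓞 K ⧸ P) q
    rw [hn]
    exact Nat.le_self_pow n.ne_zero q

/-- Genus theory: under oddness of the class group, a genus character must be trivial on `K`. -/
lemma genus_sqrt {K : Type*} [Field K] [NumberField K] [IsGalois ℚ K] {a b : ℤ} (s t : K)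
    (ha : a ≠ 0) (hb : b ≠ 0) (hs : s ^ 2 = (a : K)) (ht : t ^ 2 = (b : K))
    (hgen : ∀ σ : K ≃ₐ[ℚ] K, σ s = s → σ t = t → σ = 1)
    {e : ℤ} (he : e < 0) (δ : K) (hδ : δ ^ 2 = (e : K))
    {u : ℕ} (hE : Monoid.exponent (ClassGroup (𝓞 K)) ∣ u)
    {m d : ℤ} (hm : ¬ IsSquare m) (hd : d ≠ 0) (r : K) (hr : r ^ 2 = (m : K))
    (hgood : ∀ q : ℕ, q.Prime → m.natAbs + d.natAbs + 2 < q → ∀ x y : ℚ, ∀ A : ℤ, 2 * x = A →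
      x ^ 2 - m * y ^ 2 = (q : ℚ) ^ u → J(d | q) ≠ -1) :
    ∃ w : K, w ^ 2 = (d : K) := by
  by_contra hcon
  push Not at hcon
  have haK : (a : K) ≠ 0 := by exact_mod_cast ha
  have hbK : (b : K) ≠ 0 := by exact_mod_cast hb
  have hs0 : s ≠ 0 := by rintro rfl; apply haK; rw [← hs]; simp
  have ht0 : t ≠ 0 := by rintro rfl; apply hbK; rw [← ht]; simp
  have h1 : ¬ IsSquare d := by
    rintro ⟨c, hc⟩; apply hcon c; rw [hc]; push_cast; ring
  have h2 : ¬ IsSquare (d * a) := by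
    rintro ⟨c, hc⟩; apply hcon (c / s)
    rw [div_pow, hs, div_eq_iff haK]; rw [sq]; exact_mod_cast hc.symm
  have h3 : ¬ IsSquare (d * b) := by
    rintro ⟨c, hc⟩; apply hcon (c / t)
    rw [div_pow, ht, div_eq_iff hbK]; rw [sq]; exact_mod_cast hc.symm
  have h4 : ¬ IsSquare (d * a * b) := by
    rintro ⟨c, hc⟩; apply hcon (c / (s * t))
    rw [div_pow, mul_pow, ht, hs, div_eq_iff (mul_ne_zero haK hbK), ← mul_assoc]
    rw [sq]; exact_mod_cast hc.symm
  obtain ⟨q, hq, hqB, hqa, hqb, hqd⟩ := exists_prime_split a b d ha hb hd h1 h2 h3 h4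
    (m.natAbs + d.natAbs + 2)
  obtain ⟨P, hP⟩ := exists_prime_norm s t hs ht hgen hq (by omega) hqa hqb
  have hP0 : P ≠ ⊥ := by
    rintro rfl; rw [Ideal.absNorm_bot] at hP; exact hq.ne_zero hP.symm
  let P' : nonZeroDivisors (Ideal (𝓞 K)) := ⟨P, mem_nonZeroDivisors_of_ne_zero hP0⟩
  have h5 := (Monoid.exponent_dvd_iff_forall_pow_eq_one.mp hE) (ClassGroup.mk0 P')
  rw [← map_pow, ClassGroup.mk0_eq_one_iff] at h5
  obtain ⟨⟨α, hα⟩⟩ := h5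
  have hα' : P ^ u = Ideal.span {α} := by simpa [P'] using hα
  have h6 := congrArg Ideal.absNorm hα'
  rw [map_pow, hP, Ideal.absNorm_span_singleton] at h6
  have hαi : IsIntegral ℤ (α : K) := RingOfIntegers.isIntegral_coe α
  have hpos : 0 ≤ Algebra.norm ℤ α := by
    have hens : ¬ IsSquare e := by rintro ⟨c, hc⟩; nlinarith [mul_self_nonneg c]
    obtain ⟨x, y, hxy, -⟩ := norm_form hens δ hδ (α : K) hαi
    rw [← Algebra.coe_norm_int] at hxy
    have : (0:ℚ) ≤ (Algebra.norm ℤ α : ℤ) := by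
      rw [hxy]
      have : (e:ℚ) < 0 := by exact_mod_cast he
      nlinarith [sq_nonneg x, sq_nonneg y]
    exact_mod_cast this
  obtain ⟨x, y, hxy, A, hA⟩ := norm_form hm r hr (α : K) hαi
  rw [← Algebra.coe_norm_int] at hxy
  refine hgood q hq hqB x y A hA ?_ hqd
  rw [← hxy]
  have : Algebra.norm ℤ α = (q:ℤ) ^ u := by
    rw [← Int.natAbs_of_nonneg hpos, ← h6]; push_cast; rfl
  rw [this]; push_cast; rfl

lemma form_int {m : ℤ} (hm : Squarefree m) {x y : ℚ} {A N : ℤ} (hA : 2 * x = A)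
    (h : x ^ 2 - m * y ^ 2 = N) : ∃ B : ℤ, 2 * y = B ∧ A ^ 2 - m * B ^ 2 = 4 * N := by
  have hm0 : (m:ℚ) ≠ 0 := by exact_mod_cast hm.ne_zero
  have h1 : (m * (2 * y)) ^ 2 = ((m * (A ^ 2 - 4 * N) : ℤ) : ℚ) := by
    push_cast; rw [← hA, ← h]; ring
  have h2 : IsIntegral ℤ (m * (2 * y)) := by
    refine IsIntegral.of_pow two_pos ?_
    rw [h1]; exact isIntegral_algebraMap (R := ℤ) (A := ℚ)
  obtain ⟨C, hC⟩ := rat_int_of_isIntegral h2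
  have h3 : C ^ 2 = m * (A ^ 2 - 4 * N) := by
    rw [hC] at h1; exact_mod_cast h1
  obtain ⟨B, hB⟩ : m ∣ C := (hm.dvd_pow_iff_dvd two_ne_zero).mp ⟨_, h3⟩
  have hyB : 2 * y = B := by
    rw [hB] at hC; push_cast at hC; exact mul_left_cancel₀ hm0 hC
  refine ⟨B, hyB, ?_⟩
  have : ((A ^ 2 - m * B ^ 2 : ℤ) : ℚ) = ((4 * N : ℤ) : ℚ) := by
    push_cast; rw [← hA, ← hyB, ← h]; ring
  exact_mod_cast this

lemma jac_star {p q : ℕ} (hp : Odd p) (hq : Odd q) :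
    J((-1) ^ ((p - 1) / 2) * (p : ℤ) | q) = J(q | p) := by
  rw [jacobiSym.mul_left, jacobiSym.pow_left, jacobiSym.at_neg_one hq,
    jacobiSym.quadratic_reciprocity hp hq, ZMod.χ₄_eq_neg_one_pow (Nat.odd_iff.mp hq), ← mul_assoc,
    ← pow_mul, ← pow_add]
  have : (p - 1) / 2 = p / 2 := by obtain ⟨k, rfl⟩ := hp; omega
  rw [this, Even.neg_one_pow, one_mul]
  exact ⟨p / 2 * (q / 2), by ring⟩

lemma good_odd {m : ℤ} (hm : Squarefree m) {p : ℕ} (hp : p.Prime) (hpo : Odd p) (hpm : (p:ℤ) ∣ m)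
    {u : ℕ} (hu : Odd u) {q : ℕ} (hq : q.Prime) (hq2 : q ≠ 2) (hpq : p ≠ q) {x y : ℚ} {A : ℤ}
    (hA : 2 * x = A) (h : x ^ 2 - m * y ^ 2 = (q : ℚ) ^ u) :
    J((-1) ^ ((p - 1) / 2) * (p : ℤ) | q) ≠ -1 := by
  rw [jac_star hpo (hq.odd_of_ne_two hq2)]
  intro hJ
  have := Fact.mk hp
  rw [← jacobiSym.legendreSym.to_jacobiSym] at hJ
  obtain ⟨B, hB, hAB⟩ := form_int (N := (q:ℤ) ^ u) hm hA (by rw [h]; push_cast; rfl)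
  have h1 : legendreSym p (4 * (q:ℤ) ^ u) = -1 := by
    rw [legendreSym.mul, show (4:ℤ) = 2 ^ 2 by norm_num, legendreSym.sq_one', one_mul]
    · have : legendreSym p ((q:ℤ) ^ u) = (legendreSym p q) ^ u := by
        exact map_pow (legendreSym.hom p) _ _
      rw [this, hJ, hu.neg_one_pow]
    · intro h0
      have : p ∣ 2 := by
        rw [← Nat.cast_ofNat (R := ℤ), Int.cast_natCast, ZMod.natCast_eq_zero_iff] at h0
        exact h0
      have := (Nat.prime_dvd_prime_iff_eq hp Nat.prime_two).mp this
      subst this; exact absurd hpo (by decide)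
  rw [legendreSym.eq_neg_one_iff] at h1
  apply h1
  refine ⟨(A : ZMod p), ?_⟩
  rw [← hAB]
  have : ((m:ℤ) : ZMod p) = 0 := (ZMod.intCast_zmod_eq_zero_iff_dvd _ _).mpr hpm
  push_cast; rw [this]; ring

lemma odd_pow_mod8 {q u : ℕ} (hq : q % 2 = 1) (hu : Odd u) : (q ^ u) % 8 = q % 8 := by
  obtain ⟨k, rfl⟩ := hu
  have h1 : q ^ 2 % 8 = 1 := by
    have : q % 8 = 1 ∨ q % 8 = 3 ∨ q % 8 = 5 ∨ q % 8 = 7 := by omega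
    rcases this with h | h | h | h <;> simp [Nat.pow_mod, h]
  rw [pow_succ, pow_mul, Nat.mul_mod, Nat.pow_mod, h1]
  simp

lemma int_sq_mod8 (x : ℤ) : (x % 2 = 0 ∧ (x ^ 2 % 8 = 0 ∨ x ^ 2 % 8 = 4)) ∨ (x % 2 = 1 ∧ x ^ 2 % 8 = 1) := by
  have : x % 8 = 0 ∨ x % 8 = 1 ∨ x % 8 = 2 ∨ x % 8 = 3 ∨ x % 8 = 4 ∨ x % 8 = 5 ∨ x % 8 = 6 ∨ x % 8 = 7 := by omega
  rcases this with h | h | h | h | h | h | h | h <;> (have h2 : x ^ 2 % 8 = (x % 8) ^ 2 % 8 := by rw [sq, sq, Int.mul_emod]) <;> rw [h] at h2 <;> omega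

lemma good_two {m : ℤ} (hm : Squarefree m) (hm4 : m % 4 = 2 ∨ m % 4 = 3)
    {u : ℕ} (hu : Odd u) {q : ℕ} (hq : q.Prime) (hq2 : q ≠ 2) {x y : ℚ} {A : ℤ}
    (hA : 2 * x = A) (h : x ^ 2 - m * y ^ 2 = (q : ℚ) ^ u) :
    (m % 4 = 3 → J(-1 | q) ≠ -1) ∧ (m % 8 = 2 → J(2 | q) ≠ -1) ∧ (m % 8 = 6 → J(-2 | q) ≠ -1) := by
  have hqo := hq.odd_of_ne_two hq2
  obtain ⟨B, hB, hAB⟩ := form_int (N := (q:ℤ) ^ u) hm hA (by rw [h]; push_cast; rfl)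
  have hq8 := odd_pow_mod8 (Nat.odd_iff.mp hqo) hu
  have hq8' : ((q:ℤ) ^ u) % 8 = q % 8 := by exact_mod_cast hq8
  set N := (q:ℤ) ^ u with hN
  have hqm : (q:ℤ) % 2 = 1 := by exact_mod_cast Nat.odd_iff.mp hqo
  have hm' : m % 8 = 2 ∨ m % 8 = 3 ∨ m % 8 = 6 ∨ m % 8 = 7 := by omega
  have hmB : (m * B ^ 2) % 8 = ((m % 8) * (B ^ 2 % 8)) % 8 := Int.mul_emod _ _ _
  have hev : A % 2 = 0 ∧ B % 2 = 0 := by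
    rcases int_sq_mod8 A with ⟨h1, h1' | h1'⟩ | ⟨h1, h1'⟩ <;>
      rcases int_sq_mod8 B with ⟨h2, h2' | h2'⟩ | ⟨h2, h2'⟩ <;>
      rcases hm' with h3 | h3 | h3 | h3 <;> rw [h3, h2'] at hmB <;> omega
  obtain ⟨⟨A', hA'⟩, ⟨B', hB'⟩⟩ : 2 ∣ A ∧ 2 ∣ B := by omega
  have hAB' : A' ^ 2 - m * B' ^ 2 = N := by
    rw [hA', hB'] at hAB; linarith
  have hmB' : (m * B' ^ 2) % 8 = ((m % 8) * (B' ^ 2 % 8)) % 8 := Int.mul_emod _ _ _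
  have hqn : q % 2 = 1 := by omega
  refine ⟨fun hmm => ?_, fun hmm => ?_, fun hmm => ?_⟩
  · have hh : q % 4 = 1 := by
      rcases int_sq_mod8 A' with ⟨h1, h1' | h1'⟩ | ⟨h1, h1'⟩ <;>
      rcases int_sq_mod8 B' with ⟨h2, h2' | h2'⟩ | ⟨h2, h2'⟩ <;>
      rcases hm' with h3 | h3 | h3 | h3 <;> rw [h3, h2'] at hmB' <;> omega
    rw [jacobiSym.at_neg_one hqo, ZMod.χ₄_nat_one_mod_four hh]; decide
  · have hh : q % 8 = 1 ∨ q % 8 = 7 := by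
      rw [hmm] at hmB'
      rcases int_sq_mod8 A' with ⟨h1, h1' | h1'⟩ | ⟨h1, h1'⟩ <;>
      rcases int_sq_mod8 B' with ⟨h2, h2' | h2'⟩ | ⟨h2, h2'⟩ <;>
      rw [h2'] at hmB' <;> omega
    rw [jacobiSym.at_two hqo, ZMod.χ₈_nat_mod_eight]
    rcases hh with hh | hh <;> rw [hh] <;> decide
  · have hh : q % 8 = 1 ∨ q % 8 = 3 := by
      rw [hmm] at hmB'
      rcases int_sq_mod8 A' with ⟨h1, h1' | h1'⟩ | ⟨h1, h1'⟩ <;>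
      rcases int_sq_mod8 B' with ⟨h2, h2' | h2'⟩ | ⟨h2, h2'⟩ <;>
      rw [h2'] at hmB' <;> omega
    rw [jacobiSym.at_neg_two hqo, ← ZMod.natCast_mod q 8]
    rcases hh with hh | hh <;> rw [hh] <;> decide

lemma pstar_mod4 {p : ℕ} (hp : Odd p) : ((-1) ^ ((p - 1) / 2) * (p : ℤ)) % 4 = 1 := by
  obtain ⟨k, rfl⟩ := hp
  have : (2 * k + 1 - 1) / 2 = k := by omega
  rw [this]
  rcases Nat.even_or_odd k with h | h
  · rw [h.neg_one_pow]; obtain ⟨j, rfl⟩ := h; push_cast; omega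
  · rw [h.neg_one_pow]; obtain ⟨j, rfl⟩ := h; push_cast; omega

lemma squarefree_decomp {m : ℤ} (hm : Squarefree m) :
    ∃ S : Finset ℕ, (∀ p ∈ S, p.Prime ∧ Odd p ∧ (p:ℤ) ∣ m) ∧
      ∃ e : ℤ, m = e * ∏ p ∈ S, ((-1) ^ ((p - 1) / 2) * (p : ℤ)) ∧
      (e = 1 ∨ (e = -1 ∧ m % 4 = 3) ∨ (e = 2 ∧ m % 8 = 2) ∨ (e = -2 ∧ m % 8 = 6)) := by
  have hn : Squarefree m.natAbs := Int.squarefree_natAbs.mpr hm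
  let S := m.natAbs.primeFactors.erase 2
  have hS : ∀ p ∈ S, p.Prime ∧ Odd p ∧ (p:ℤ) ∣ m := by
    intro p hp
    rw [Finset.mem_erase] at hp
    have hpp := Nat.prime_of_mem_primeFactors hp.2
    exact ⟨hpp, hpp.odd_of_ne_two hp.1, Int.natCast_dvd.mpr (Nat.dvd_of_mem_primeFactors hp.2)⟩
  refine ⟨S, hS, ?_⟩
  set D₀ := ∏ p ∈ S, ((-1) ^ ((p - 1) / 2) * (p : ℤ)) with hD₀
  have hmod : D₀ % 4 = 1 := by
    rw [hD₀]
    have : ∀ T : Finset ℕ, (∀ p ∈ T, Odd p) → (∏ p ∈ T, ((-1) ^ ((p - 1) / 2) * (p : ℤ))) % 4 = 1 := by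
      intro T
      induction T using Finset.induction_on with
      | empty => intro _; rfl
      | insert p T hpT ih =>
        intro hT
        rw [Finset.prod_insert hpT, Int.mul_emod, pstar_mod4 (hT p (Finset.mem_insert_self _ _)),
          ih fun q hq => hT q (Finset.mem_insert_of_mem hq)]
        rfl
    exact this S fun p hp => (hS p hp).2.1
  have habs : D₀.natAbs = ∏ p ∈ S, p := by
    rw [hD₀]
    refine (map_prod Int.natAbsHom _ _).trans ?_
    refine Finset.prod_congr rfl fun p _ => ?_
    change Int.natAbs _ = _
    rw [Int.natAbs_mul, Int.natAbs_pow]; simp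
  have hprod : m.natAbs = D₀.natAbs ∨ m.natAbs = 2 * D₀.natAbs := by
    have h1 := Nat.prod_primeFactors_of_squarefree hn
    by_cases h2 : 2 ∈ m.natAbs.primeFactors
    · right; rw [habs, Finset.mul_prod_erase _ (fun p => p) h2, h1]
    · left; simp only [habs, S]; rw [Finset.erase_eq_of_notMem h2, h1]
  have hcases : m = D₀ ∨ m = -D₀ ∨ m = 2 * D₀ ∨ m = -2 * D₀ := by omega
  rcases hcases with h | h | h | h
  · exact ⟨1, by rw [one_mul]; exact h, Or.inl rfl⟩
  · exact ⟨-1, by rw [h]; ring, Or.inr (Or.inl ⟨rfl, by omega⟩)⟩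
  · exact ⟨2, h, Or.inr (Or.inr (Or.inl ⟨rfl, by omega⟩))⟩
  · exact ⟨-2, h, Or.inr (Or.inr (Or.inr ⟨rfl, by omega⟩))⟩

lemma quad_data {k : Type*} [Field k] [NumberField k] {D : ℤ} (hD : ¬ IsSquare D) (δ : 𝓞 k)
    (hδ : δ ^ 2 = (D : 𝓞 k)) (hspan : ∀ z : k, ∃ x y : ℚ, z = x + y * (δ : k)) (z : 𝓞 k) :
    ∃ T N s : ℤ, z ^ 2 = T * z - N ∧ 2 * D * z = D * T + s * δ ∧ s ^ 2 = D * (T ^ 2 - 4 * N) ∧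
      Algebra.norm ℤ z = N := by
  have : Fact (∀ s : ℚ, s ^ 2 ≠ (D : ℚ) + 0 * s) := ⟨fun s => by
    simpa using rat_not_sq hD s⟩
  have hδk : (δ : k) ^ 2 = (D : k) := by
    have := congrArg (algebraMap (𝓞 k) k) hδ
    simpa using this
  let f : QuadraticAlgebra ℚ (D : ℚ) 0 →ₐ[ℚ] k := QuadraticAlgebra.lift ⟨(δ : k), by
    rw [← sq, hδk, zero_smul, add_zero, Algebra.smul_def, mul_one]; simp⟩
  have hf : ∀ w, f w = (w.re : k) + (w.im : k) * δ := by
    intro w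
    simp [f, QuadraticAlgebra.lift, Algebra.smul_def]
    rfl
  have hbij : Function.Bijective f := by
    refine ⟨f.toRingHom.injective, fun v => ?_⟩
    obtain ⟨x, y, hxy⟩ := hspan v
    exact ⟨⟨x, y⟩, by rw [hf]; exact hxy.symm⟩
  let F := AlgEquiv.ofBijective f hbij
  obtain ⟨w, hw⟩ := hbij.2 (z : k)
  have hzi : IsIntegral ℤ (z : k) := RingOfIntegers.isIntegral_coe z
  have hwi : IsIntegral ℤ w := by
    rw [← hw] at hzi
    exact (isIntegral_algHom_iff (f.restrictScalars ℤ) hbij.1).mp hzi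
  have hN : Algebra.norm ℚ (z : k) = w.re ^ 2 - D * w.im ^ 2 := by
    have h1 : Algebra.norm ℚ (F w) = Algebra.norm ℚ w := Algebra.norm_eq_of_algEquiv F w
    have h2 : Algebra.norm ℚ w = w.norm := by
      rw [← QuadraticAlgebra.det_toLinearMap_eq_norm, Algebra.norm_apply]
      rfl
    have h3 : F w = (z : k) := hw
    rw [← h3, h1, h2, QuadraticAlgebra.norm_def]; ring
  have hT : ∃ T : ℤ, 2 * w.re = T := by
    have hs : IsIntegral ℤ (star w) :=
      hwi.map (starRingEnd (QuadraticAlgebra ℚ (D : ℚ) 0)).toIntAlgHom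
    have hadd := hwi.add hs
    have h2 : w + star w = algebraMap ℚ (QuadraticAlgebra ℚ (D : ℚ) 0) (2 * w.re) := by
      have h3 := QuadraticAlgebra.algebraMap_trace_eq_add_star (z := w)
      rw [QuadraticAlgebra.trace_def, zero_mul, add_zero] at h3
      exact h3.symm
    rw [h2] at hadd
    exact rat_int_of_isIntegral ((isIntegral_algebraMap_iff (algebraMap ℚ _).injective).mp hadd)
  obtain ⟨T, hT⟩ := hT
  rw [← Algebra.coe_norm_int] at hN
  set N := Algebra.norm ℤ z with hNdef
  have hsq : (2 * D * w.im) ^ 2 = ((D * (T ^ 2 - 4 * N) : ℤ) : ℚ) := by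
    push_cast; rw [hN, ← hT]; ring
  obtain ⟨s, hs⟩ : ∃ s : ℤ, 2 * D * w.im = s := by
    refine rat_int_of_isIntegral (IsIntegral.of_pow two_pos ?_)
    rw [hsq]; exact isIntegral_algebraMap (R := ℤ) (A := ℚ)
  have hzk : (z : k) = (w.re : k) + (w.im : k) * δ := by rw [← hw, hf]
  have hTk : 2 * (w.re : k) = (T : k) := by exact_mod_cast congrArg (fun x : ℚ => (x : k)) hT
  have hsk : 2 * (D : k) * (w.im : k) = (s : k) := by
    exact_mod_cast congrArg (fun x : ℚ => (x : k)) hs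
  have hNk : (N : k) = (w.re : k) ^ 2 - D * (w.im : k) ^ 2 := by
    exact_mod_cast congrArg (fun x : ℚ => (x : k)) hN
  refine ⟨T, N, s, ?_, ?_, ?_, rfl⟩
  · apply RingOfIntegers.ext
    simp only [map_pow, map_sub, map_mul, map_intCast]
    rw [hNk, ← hTk]
    change (z : k) ^ 2 = _ * (z : k) - _
    rw [hzk]
    linear_combination (w.im : k) ^ 2 * hδk
  · apply RingOfIntegers.ext
    simp only [map_add, map_mul, map_intCast, map_ofNat]
    change 2 * (D : k) * (z : k) = (D : k) * T + s * (δ : k)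
    rw [hzk, ← hTk, ← hsk]
    ring
  · rw [hs] at hsq; exact_mod_cast hsq

lemma int_dvd_cancel {R : Type*} [CommRing R] {q n : ℤ} (h : IsCoprime q n) {z : R}
    (hd : (q : R) ∣ n * z) : (q : R) ∣ z := by
  have h2 : IsCoprime (q : R) (n : R) := by
    simpa using h.map (Int.castRingHom R)
  exact h2.dvd_of_dvd_mul_left hd

lemma quad_unram {k : Type*} [Field k] [NumberField k] {D : ℤ} (hD : ¬ IsSquare D) (δ : 𝓞 k)
    (hδ : δ ^ 2 = (D : 𝓞 k)) (hspan : ∀ z : k, ∃ x y : ℚ, z = x + y * (δ : k))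
    {q : ℕ} (hq : q.Prime) (hqD : ¬ (q:ℤ) ∣ D) (h2 : q = 2 → (2 : 𝓞 k) ∣ 1 + δ) (z : 𝓞 k)
    (hz : (q : 𝓞 k) ∣ z ^ 2) : (q : 𝓞 k) ∣ z := by
  obtain ⟨T, N, s, e1, e2, e3, e4⟩ := quad_data hD δ hδ hspan z
  have hqp : Prime (q:ℤ) := Nat.prime_iff_prime_int.mp hq
  have hcast : (q : 𝓞 k) = ((q : ℤ) : 𝓞 k) := by simp
  have hqN : (q:ℤ) ∣ N := by
    obtain ⟨w, hw⟩ := hz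
    have h1 := congrArg (Algebra.norm ℤ) hw
    rw [map_pow, map_mul, e4, hcast] at h1
    have h3 : (q:ℤ) ∣ Algebra.norm ℤ ((q:ℤ) : 𝓞 k) := by
      have : Algebra.norm ℤ ((q:ℤ) : 𝓞 k) = (q:ℤ) ^ Module.finrank ℤ (𝓞 k) := by
        rw [← Algebra.norm_algebraMap]; simp
      rw [this]
      exact dvd_pow_self _ Module.finrank_pos.ne'
    exact hqp.dvd_of_dvd_pow (h1 ▸ h3.mul_right _)
  rw [hcast] at hz ⊢
  have hTz : ((q:ℤ) : 𝓞 k) ∣ T * z := by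
    have h1 : (T : 𝓞 k) * z = z ^ 2 + N := by rw [e1]; ring
    rw [h1]
    exact dvd_add hz (by exact_mod_cast Int.cast_dvd_cast (α := 𝓞 k) _ _ hqN)
  have hcop : ∀ n : ℤ, ¬ (q:ℤ) ∣ n → IsCoprime (q:ℤ) n := fun n hn =>
    (hqp.coprime_iff_not_dvd).mpr hn
  by_cases hqT : (q:ℤ) ∣ T
  swap
  · exact int_dvd_cancel (hcop T hqT) hTz
  by_cases hq2 : q = 2
  · subst hq2
    obtain ⟨v, hv⟩ := h2 rfl
    obtain ⟨T1, rfl⟩ := hqT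
    obtain ⟨N1, rfl⟩ := hqN
    have hs2 : (2:ℤ) ∣ s := by
      refine Int.prime_two.dvd_of_dvd_pow (n := 2) ⟨D * (2 * T1 ^ 2 - 4 * N1), ?_⟩
      rw [e3]; push_cast; ring
    obtain ⟨s1, rfl⟩ := hs2
    have e5 : s1 ^ 2 = D * (T1 ^ 2 - 2 * N1) := by
      push_cast at e3; linarith
    have hpar : (2:ℤ) ∣ D * T1 - s1 := by
      have hD1 : D % 2 = 1 := by push_cast at hqD; omega
      have p1 : (s1 ^ 2) % 2 = (T1 ^ 2) % 2 := by
        rw [e5, Int.mul_emod, hD1]; omega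
      have p2 : ∀ x : ℤ, x ^ 2 % 2 = x % 2 := fun x => by
        rcases Int.emod_two_eq_zero_or_one x with h | h <;> simp [sq, Int.mul_emod, h]
      rw [p2, p2] at p1
      have p3 : (D * T1) % 2 = T1 % 2 := by rw [Int.mul_emod, hD1]; omega
      omega
    obtain ⟨j, hj⟩ := hpar
    refine int_dvd_cancel (hcop D hqD) ⟨j + s1 * v, ?_⟩
    have hjk : (D : 𝓞 k) * T1 - s1 = 2 * j := by exact_mod_cast congrArg (fun x : ℤ => (x : 𝓞 k)) hj
    have e2' : (D : 𝓞 k) * z = D * T1 + s1 * δ := by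
      have h20 : (2 : 𝓞 k) ≠ 0 := two_ne_zero
      apply mul_left_cancel₀ h20
      push_cast at e2
      linear_combination e2
    push_cast
    linear_combination e2' + hjk + (s1 : 𝓞 k) * hv
  · have hqs : (q:ℤ) ∣ s := by
      refine hqp.dvd_of_dvd_pow (n := 2) ?_
      rw [e3]
      exact Dvd.dvd.mul_left (dvd_sub (dvd_pow hqT two_ne_zero) (hqN.mul_left 4)) _
    have hq2D : ¬ (q:ℤ) ∣ 2 * D := by
      intro h
      rcases hqp.dvd_or_dvd h with h | h
      · exact hq2 ((Nat.prime_dvd_prime_iff_eq hq Nat.prime_two).mp (by exact_mod_cast h))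
      · exact hqD h
    refine int_dvd_cancel (hcop _ hq2D) ?_
    push_cast
    rw [e2]
    have c1 := Int.cast_dvd_cast (α := 𝓞 k) _ _ hqT
    have c2 := Int.cast_dvd_cast (α := 𝓞 k) _ _ hqs
    push_cast at c1 c2
    exact dvd_add (c1.mul_left _) (c2.mul_right _)

lemma nat_dvd_of_cast {k : Type*} [Field k] [NumberField k] {c t : ℕ} (hc : c ≠ 0)
    (h : (c : 𝓞 k) ∣ (t : 𝓞 k)) : c ∣ t := by
  obtain ⟨w, hw⟩ := h
  have hk : (t : k) = c * (w : k) := by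
    have := congrArg (algebraMap (𝓞 k) k) hw
    simpa using this
  have hck : (c : k) ≠ 0 := by exact_mod_cast hc
  have hwk : (w : k) = algebraMap ℚ k ((t : ℚ) / c) := by
    rw [map_div₀]; simp only [map_natCast]
    rw [hk]; field_simp
  have hwi : IsIntegral ℤ (w : k) := RingOfIntegers.isIntegral_coe w
  rw [hwk, isIntegral_algebraMap_iff (algebraMap ℚ k).injective] at hwi
  obtain ⟨n, hn⟩ := rat_int_of_isIntegral hwi
  have hcq : (c : ℚ) ≠ 0 := by exact_mod_cast hc
  rw [div_eq_iff hcq] at hn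
  have : (t : ℤ) = n * c := by exact_mod_cast hn
  exact Int.natCast_dvd_natCast.mp ⟨n, by rw [this]; ring⟩

lemma ambig_principal {k : Type*} [Field k] [NumberField k]
    (H : ∀ q : ℕ, q.Prime → ∃ (π : 𝓞 k) (c : ℕ), 1 < c ∧
      Ideal.span {π} ^ 2 = Ideal.span {(c : 𝓞 k)} ∧ ∀ z, (q : 𝓞 k) ∣ z ^ 2 → π ∣ z)
    (t : ℕ) (ht : t ≠ 0) (B : Ideal (𝓞 k)) (hB : B ^ 2 = Ideal.span {(t : 𝓞 k)}) :
    ∃ b, B = Ideal.span {b} := by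
  induction t using Nat.strong_induction_on generalizing B with
  | _ t ih =>
    by_cases ht1 : t = 1
    · subst ht1
      refine ⟨1, ?_⟩
      rw [Nat.cast_one, Ideal.span_singleton_one] at hB
      rw [Ideal.span_singleton_one, Ideal.eq_top_iff_one]
      have : (1 : 𝓞 k) ∈ B ^ 2 := by rw [hB]; trivial
      exact Ideal.pow_le_self two_ne_zero this
    · obtain ⟨q, hq, hqt⟩ := Nat.exists_prime_and_dvd ht1
      obtain ⟨π, c, hc, hπ, hdiv⟩ := H q hq
      have hle : B ≤ Ideal.span {π} := by
        intro b hb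
        rw [Ideal.mem_span_singleton]
        apply hdiv
        have : b ^ 2 ∈ B ^ 2 := Ideal.pow_mem_pow hb 2
        rw [hB, Ideal.mem_span_singleton] at this
        exact (Nat.cast_dvd_cast hqt).trans this
      obtain ⟨B1, hB1⟩ := Ideal.dvd_iff_le.mpr hle
      have h1 : Ideal.span {(c : 𝓞 k)} * B1 ^ 2 = Ideal.span {(t : 𝓞 k)} := by
        rw [← hB, hB1, mul_pow, hπ]
      have hct : c ∣ t := by
        apply nat_dvd_of_cast (k := k) (by omega)
        rw [← Ideal.span_singleton_le_span_singleton, ← h1]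
        exact Ideal.mul_le_left
      obtain ⟨t', rfl⟩ := hct
      have hc0 : Ideal.span {(c : 𝓞 k)} ≠ 0 := by
        rw [Ne, Ideal.zero_eq_bot, Ideal.span_singleton_eq_bot]
        have : c ≠ 0 := by omega
        exact_mod_cast this
      have h2 : B1 ^ 2 = Ideal.span {(t' : 𝓞 k)} := by
        apply mul_left_cancel₀ hc0
        rw [h1, Ideal.span_singleton_mul_span_singleton]; push_cast; rfl
      have ht'0 : t' ≠ 0 := by rintro rfl; simp at ht
      obtain ⟨b, hb⟩ := ih t' (by nlinarith [Nat.pos_of_ne_zero ht'0]) ht'0 B1 h2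
      exact ⟨π * b, by rw [hB1, hb, Ideal.span_singleton_mul_span_singleton]⟩

lemma quad_odd {k : Type*} [Field k] [NumberField k] {D : ℤ} (hD : D < 0) (δ : 𝓞 k)
    (hδ : δ ^ 2 = (D : 𝓞 k)) (hspan : ∀ z : k, ∃ x y : ℚ, z = x + y * (δ : k))
    (H : ∀ q : ℕ, q.Prime → ∃ (π : 𝓞 k) (c : ℕ), 1 < c ∧
      Ideal.span {π} ^ 2 = Ideal.span {(c : 𝓞 k)} ∧ ∀ z, (q : 𝓞 k) ∣ z ^ 2 → π ∣ z)
    (c : ClassGroup (𝓞 k)) (hc : c ^ 2 = 1) : c = 1 := by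
  have hDns : ¬ IsSquare D := by rintro ⟨c, hc⟩; nlinarith [mul_self_nonneg c]
  obtain ⟨I, rfl⟩ := ClassGroup.mk0_surjective c
  have hI0 : (I : Ideal (𝓞 k)) ≠ ⊥ := nonZeroDivisors.coe_ne_zero I
  rw [← map_pow, ClassGroup.mk0_eq_one_iff] at hc
  rw [ClassGroup.mk0_eq_one_iff]
  obtain ⟨⟨γ, hγ⟩⟩ := hc
  have hγ' : (I : Ideal (𝓞 k)) ^ 2 = Ideal.span {γ} := by simpa using hγ
  set n := Ideal.absNorm (I : Ideal (𝓞 k)) with hn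
  have hn0 : n ≠ 0 := by rw [hn, Ne, Ideal.absNorm_eq_zero_iff]; exact hI0
  obtain ⟨T, N, s, e1, e2, e3, e4⟩ := quad_data hDns δ hδ hspan γ
  have hNpos : 0 ≤ N := by
    by_contra hneg
    push Not at hneg
    nlinarith [sq_nonneg s, sq_nonneg T, mul_pos_of_neg_of_neg hD hneg]
  have hNn : N = (n:ℤ) ^ 2 := by
    have h1 := congrArg Ideal.absNorm hγ'
    rw [map_pow, Ideal.absNorm_span_singleton, e4, ← hn] at h1
    rw [← Int.natAbs_of_nonneg hNpos, ← h1]; push_cast; rfl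
  suffices h : ∃ b, (I : Ideal (𝓞 k)) = Ideal.span {b} by
    obtain ⟨b, hb⟩ := h
    exact ⟨⟨b, by rw [hb]⟩⟩
  have hn𝓞 : (n : 𝓞 k) ∈ (I : Ideal (𝓞 k)) := Ideal.absNorm_mem _
  have hβsq : (γ + n) ^ 2 = ((T + 2 * n : ℤ) : 𝓞 k) * γ := by
    rw [hNn] at e1; push_cast at e1 ⊢
    linear_combination e1
  by_cases hβ : γ + n = 0
  · apply ambig_principal H n hn0
    rw [hγ', eq_neg_of_add_eq_zero_left hβ, Ideal.span_singleton_neg]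
  · have hβI : γ + n ∈ (I : Ideal (𝓞 k)) := by
      refine Ideal.add_mem _ ?_ hn𝓞
      apply Ideal.pow_le_self two_ne_zero
      rw [hγ']; exact Ideal.mem_span_singleton_self _
    obtain ⟨B, hB⟩ := Ideal.dvd_iff_le.mpr ((Ideal.span_singleton_le_iff_mem _).mpr hβI)
    have hB2 : B ^ 2 = Ideal.span {(((T + 2 * n : ℤ).natAbs : ℕ) : 𝓞 k)} := by
      have h0 : (I : Ideal (𝓞 k)) ^ 2 ≠ 0 := pow_ne_zero 2 hI0
      apply mul_left_cancel₀ h0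
      rw [← mul_pow, ← hB, Ideal.span_singleton_pow, hβsq, hγ',
        ← Ideal.span_singleton_mul_span_singleton, mul_comm]
      congr 1
      rw [Ideal.span_singleton_eq_span_singleton]
      have := Int.associated_natAbs (T + 2 * n)
      have h3 := this.map (Int.castRingHom (𝓞 k))
      simpa using h3
    have ht0 : (T + 2 * n : ℤ).natAbs ≠ 0 := by
      intro h0
      rw [Int.natAbs_eq_zero] at h0
      rw [h0] at hβsq
      apply hβ
      simpa using hβsq
    obtain ⟨b, hb⟩ := ambig_principal H _ ht0 B hB2
    have hb0 : b ≠ 0 := by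
      rintro rfl
      rw [hb] at hB
      simp at hB
      exact hβ hB
    have hmem : γ + n ∈ Ideal.span {b} := by
      have : γ + n ∈ Ideal.span {γ + (n : 𝓞 k)} := Ideal.mem_span_singleton_self _
      rw [hB, hb] at this
      exact Ideal.mul_le_right this
    obtain ⟨b', hb'⟩ := Ideal.mem_span_singleton.mp hmem
    refine ⟨b', ?_⟩
    have hb0' : Ideal.span {b} ≠ 0 := by
      rwa [Ne, Ideal.zero_eq_bot, Ideal.span_singleton_eq_bot]
    apply mul_left_cancel₀ hb0'
    rw [Ideal.span_singleton_mul_span_singleton, ← hb', hB, hb, mul_comm]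

lemma ram_H {k : Type*} [Field k] [NumberField k] {q : ℕ} (hq : 1 < q) (π : 𝓞 k)
    (h : Associated (π ^ 2) (q : 𝓞 k)) : ∃ (π : 𝓞 k) (c : ℕ), 1 < c ∧
      Ideal.span {π} ^ 2 = Ideal.span {(c : 𝓞 k)} ∧ ∀ z, (q : 𝓞 k) ∣ z ^ 2 → π ∣ z := by
  refine ⟨π, q, hq, ?_, fun z hz => ?_⟩
  · rw [Ideal.span_singleton_pow, Ideal.span_singleton_eq_span_singleton]
    exact h
  · exact (IsIntegrallyClosed.pow_dvd_pow_iff two_ne_zero).mp (h.dvd.trans hz)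

lemma unram_H {k : Type*} [Field k] [NumberField k] {q : ℕ} (hq : 1 < q)
    (h : ∀ z, (q : 𝓞 k) ∣ z ^ 2 → (q : 𝓞 k) ∣ z) : ∃ (π : 𝓞 k) (c : ℕ), 1 < c ∧
      Ideal.span {π} ^ 2 = Ideal.span {(c : 𝓞 k)} ∧ ∀ z, (q : 𝓞 k) ∣ z ^ 2 → π ∣ z := by
  refine ⟨q, q ^ 2, Nat.one_lt_pow two_ne_zero hq, ?_, h⟩
  rw [Ideal.span_singleton_pow]; push_cast; rfl

lemma pstar_no_two_torsion_aux {k : Type*} [Field k] [NumberField k] {D : ℤ} (δ : k)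
    (hδ : δ ^ 2 = (D : k)) (hspan : ∀ z : k, ∃ x y : ℚ, z = x + y * δ)
    (hD : D = -1 ∨ D = -2 ∨ ∃ p : ℕ, p.Prime ∧ p % 4 = 3 ∧ D = -p)
    (c : ClassGroup (𝓞 k)) (hc : c ^ 2 = 1) : c = 1 := by
  have hDneg : D < 0 := by
    rcases hD with h | h | ⟨p, hp, _, h⟩
    · omega
    · omega
    · have := hp.pos; omega
  have hDns : ¬ IsSquare D := by rintro ⟨c, hc⟩; nlinarith [mul_self_nonneg c]
  have hintg : IsIntegral ℤ δ := by
    refine IsIntegral.of_pow two_pos ?_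
    rw [hδ]; exact isIntegral_algebraMap (R := ℤ) (A := k)
  obtain ⟨δ', rfl⟩ : ∃ δ' : 𝓞 k, (δ' : k) = δ := ⟨⟨δ, hintg⟩, rfl⟩
  have hδ' : δ' ^ 2 = (D : 𝓞 k) := by
    apply RingOfIntegers.ext
    simpa using hδ
  refine quad_odd hDneg δ' hδ' hspan ?_ c hc
  intro q hq
  have hun := quad_unram hDns δ' hδ' hspan hq
  rcases hD with rfl | rfl | ⟨p, hp, hp4, rfl⟩
  · by_cases hq2 : q = 2
    · subst hq2
      refine ram_H hq.one_lt (1 + δ') ?_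
      have h1 : (1 + δ') ^ 2 = (2 : ℕ) * δ' := by
        push_cast at hδ' ⊢; linear_combination hδ'
      rw [h1]
      have hu : IsUnit δ' := IsUnit.of_mul_eq_one (-δ') (by
        push_cast at hδ'; linear_combination -hδ')
      exact (associated_mul_isUnit_left_iff hu).mpr (Associated.refl _)
    · refine unram_H hq.one_lt (hun ?_ (fun h => absurd h hq2))
      intro h
      have : (q:ℤ) ∣ 1 := (dvd_neg.mpr h).trans (by norm_num)
      have := hq.one_lt
      have := Int.le_of_dvd one_pos ‹(q:ℤ) ∣ 1›
      omega
  · by_cases hq2 : q = 2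
    · subst hq2
      refine ram_H hq.one_lt δ' ?_
      rw [hδ']
      push_cast
      exact (Associated.refl _).neg_left
    · refine unram_H hq.one_lt (hun ?_ (fun h => absurd h hq2))
      intro h
      rw [dvd_neg] at h
      exact hq2 ((Nat.prime_dvd_prime_iff_eq hq Nat.prime_two).mp (by exact_mod_cast h))
  · by_cases hqp : q = p
    · subst hqp
      refine ram_H hq.one_lt δ' ?_
      rw [hδ']
      push_cast
      exact (Associated.refl _).neg_left
    · refine unram_H hq.one_lt (hun ?_ (fun h => ?_))
      · intro h
        rw [dvd_neg] at h
        exact hqp ((Nat.prime_dvd_prime_iff_eq hq hp).mp (by exact_mod_cast h))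
      · obtain ⟨j, hj⟩ : ∃ j : ℕ, p = 4 * j + 3 := ⟨p / 4, by omega⟩
        set w : k := (1 + (δ' : k)) / 2 with hw
        have hw2 : w ^ 2 - w + (j + 1) = 0 := by
          rw [hw]
          have : (δ' : k) ^ 2 = -(4 * j + 3) := by rw [hδ, hj]; push_cast; ring
          linear_combination (1/4) * this
        have hwi : IsIntegral ℤ w := by
          refine ⟨Polynomial.X ^ 2 - Polynomial.X + Polynomial.C (j + 1 : ℤ), ?_, ?_⟩
          · monicity!
          · simpa using hw2
        refine ⟨⟨w, hwi⟩, ?_⟩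
        apply RingOfIntegers.ext
        simp only [map_add, map_mul, map_one, map_ofNat]
        change 1 + (δ' : k) = 2 * w
        rw [hw]; ring

lemma pstar_no_two_torsion {k : Type*} [Field k] [NumberField k] {d : ℤ} (hd : Pstar d)
    (hneg : d < 0) (δ : k)
    (hδ : δ ^ 2 = (d : k)) (hspan : ∀ z : k, ∃ x y : ℚ, z = x + y * δ)
    (c : ClassGroup (𝓞 k)) (hc : c ^ 2 = 1) : c = 1 := by
  have hspan2 : ∀ z : k, ∃ x y : ℚ, z = x + y * (δ / 2) := by
    intro z
    obtain ⟨x, y, h⟩ := hspan z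
    exact ⟨x, 2 * y, by rw [h]; push_cast; ring⟩
  rcases hd with rfl | rfl | rfl | ⟨p, hp, hpo, rfl⟩
  · norm_num at hneg
  · refine pstar_no_two_torsion_aux (D := -1) (δ / 2) ?_ hspan2 (Or.inl rfl) c hc
    rw [div_pow, hδ]; push_cast; norm_num
  · refine pstar_no_two_torsion_aux (D := -2) (δ / 2) ?_ hspan2 (Or.inr (Or.inl rfl)) c hc
    rw [div_pow, hδ]; push_cast; norm_num
  · rcases Nat.even_or_odd ((p - 1) / 2) with h | h
    · rw [h.neg_one_pow] at hneg; omega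
    · rw [h.neg_one_pow] at hδ
      refine pstar_no_two_torsion_aux (D := -p) δ (by simpa using hδ) hspan
        (Or.inr (Or.inr ⟨p, hp, ?_, rfl⟩)) c hc
      obtain ⟨a, ha⟩ := hpo
      obtain ⟨b, hb⟩ := h
      omega

lemma exponent_halve {G : Type*} [Group G] {u : ℕ} (h2 : ∀ c : G, c ^ 2 = 1 → c = 1)
    (h : Monoid.exponent G ∣ 2 * u) : Monoid.exponent G ∣ u := by
  rw [Monoid.exponent_dvd_iff_forall_pow_eq_one] at h ⊢
  intro g
  apply h2
  rw [← pow_mul, mul_comm]; exact h g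

lemma exists_eigen {K : Type*} [Field K] [NumberField K] [IsGalois ℚ K] (σ τ : K ≃ₐ[ℚ] K)
    (hc : σ * τ = τ * σ) (hτ : τ * τ = 1) (hn : τ ∉ Subgroup.zpowers σ) :
    ∃ s : K, s ≠ 0 ∧ σ s = s ∧ τ s = -s := by
  have h1 : ¬ τ ∈ (IntermediateField.fixedField (Subgroup.zpowers σ)).fixingSubgroup := by
    rwa [IntermediateField.fixingSubgroup_fixedField]
  rw [IntermediateField.mem_fixingSubgroup_iff] at h1
  push Not at h1
  obtain ⟨z, hz, hzt⟩ := h1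
  have hσz : σ z = z := by
    rw [IntermediateField.mem_fixedField_iff] at hz
    exact hz σ (Subgroup.mem_zpowers σ)
  have hττ : τ (τ z) = z := by
    rw [← AlgEquiv.mul_apply, hτ]; rfl
  refine ⟨z - τ z, sub_ne_zero.mpr (fun h => hzt h.symm), ?_, ?_⟩
  · rw [map_sub, hσz, ← AlgEquiv.mul_apply, hc, AlgEquiv.mul_apply, hσz]
  · rw [map_sub, hττ]; ring

lemma exists_scale {K : Type*} [Field K] [NumberField K] (s : K) (hs : s ≠ 0) (q : ℚ)
    (hq : s ^ 2 = (q : K)) :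
    ∃ (a : ℤ) (c : ℚ), Squarefree a ∧ c ≠ 0 ∧ ((c : K) * s) ^ 2 = (a : K) := by
  have hq0 : q ≠ 0 := by
    rintro rfl
    simp at hq
    exact hs hq
  obtain ⟨a, b, hab, ha⟩ := Nat.sq_mul_squarefree (q.num * q.den).natAbs
  set N : ℤ := q.num * q.den with hN
  have hN0 : N ≠ 0 := mul_ne_zero (Rat.num_ne_zero.mpr hq0) (by exact_mod_cast q.den_nz)
  have hb0 : b ≠ 0 := by
    rintro rfl
    simp at hab
    exact hN0 (Int.natAbs_eq_zero.mp hab.symm)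
  have hsgn : N = N.sign * ((b : ℤ) ^ 2 * a) := by
    have : ((b ^ 2 * a : ℕ) : ℤ) = N.natAbs := by rw [hab]
    push_cast at this
    rw [this]
    exact_mod_cast (Int.sign_mul_natAbs N).symm
  have hqN : (q.den : ℚ) ^ 2 * q = N := by
    rw [hN]; push_cast
    have := Rat.mul_den_eq_num q
    linear_combination (q.den : ℚ) * this
  refine ⟨N.sign * a, (q.den : ℚ) / b, ?_, ?_, ?_⟩
  · have h1 : Squarefree (a : ℤ) := Int.squarefree_natCast.mpr ha
    have h2 : Associated ((a : ℤ)) (N.sign * a) := by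
      rcases Int.lt_or_gt_of_ne hN0 with h | h
      · rw [Int.sign_eq_neg_one_of_neg h, neg_one_mul]
        exact (Associated.refl _).neg_right
      · rw [Int.sign_eq_one_of_pos h, one_mul]
    exact (h2.squarefree_iff).mp h1
  · have : (q.den : ℚ) ≠ 0 := by exact_mod_cast q.den_nz
    have : (b : ℚ) ≠ 0 := by exact_mod_cast hb0
    positivity
  · rw [mul_pow, hq]
    have hbq : (b : ℚ) ≠ 0 := by exact_mod_cast hb0
    have : ((q.den : ℚ) / b) ^ 2 * q = ((N.sign * a : ℤ) : ℚ) := by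
      rw [div_pow, div_mul_eq_mul_div, hqN, div_eq_iff (pow_ne_zero 2 hbq)]
      have := congrArg (fun x : ℤ => (x : ℚ)) hsgn
      push_cast at this ⊢
      linear_combination this
    exact_mod_cast congrArg (fun x : ℚ => (x : K)) this

lemma biquad_structure {K : Type*} [Field K] [NumberField K] [IsGalois ℚ K]
    (e : (K ≃ₐ[ℚ] K) ≃* (Fin 2 → Multiplicative (ZMod 2))) :
    ∃ (σ τ : K ≃ₐ[ℚ] K) (a b : ℤ) (s t : K), Squarefree a ∧ Squarefree b ∧ s ^ 2 = (a : K) ∧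
      t ^ 2 = (b : K) ∧ s ≠ 0 ∧ t ≠ 0 ∧ σ s = s ∧ τ s = -s ∧ τ t = t ∧ σ t = -t ∧
      (∀ ρ, ρ = 1 ∨ ρ = σ ∨ ρ = τ ∨ ρ = σ * τ) := by
  set g : Multiplicative (ZMod 2) := Multiplicative.ofAdd 1 with hg
  have key : ∀ x : Fin 2 → Multiplicative (ZMod 2), x = 1 ∨ x = ![g, 1] ∨ x = ![1, g] ∨
      x = ![g, 1] * ![1, g] := by
    rw [hg]; decide
  set σ := e.symm ![g, 1] with hσ
  set τ := e.symm ![1, g] with hτ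
  have hall : ∀ ρ, ρ = 1 ∨ ρ = σ ∨ ρ = τ ∨ ρ = σ * τ := by
    intro ρ
    have := key (e ρ)
    simpa [hσ, hτ, ← map_mul, MulEquiv.eq_symm_apply] using this
  have hcomm : σ * τ = τ * σ := by
    rw [hσ, hτ, ← map_mul, ← map_mul, mul_comm]
  have hg1 : g ≠ 1 := by rw [hg]; decide
  have hgg : g * g = 1 := by rw [hg]; decide
  have hττ : τ * τ = 1 := by
    rw [hτ, ← map_mul, ← map_one e.symm]; congr 1
    funext i; fin_cases i <;> simp [hgg]
  have hσσ : σ * σ = 1 := by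
    rw [hσ, ← map_mul, ← map_one e.symm]; congr 1
    funext i; fin_cases i <;> simp [hgg]
  have hn1 : τ ∉ Subgroup.zpowers σ := by
    rintro ⟨n, hn⟩
    have h1 := congrFun (congrArg e hn) 1
    simp [hσ, hτ] at h1
    exact hg1 h1.symm
  have hn2 : σ ∉ Subgroup.zpowers τ := by
    rintro ⟨n, hn⟩
    have h1 := congrFun (congrArg e hn) 0
    simp [hσ, hτ] at h1
    exact hg1 h1.symm
  obtain ⟨s, hs0, hs1, hs2⟩ := exists_eigen σ τ hcomm hττ hn1
  obtain ⟨t, ht0, ht1, ht2⟩ := exists_eigen τ σ hcomm.symm hσσ hn2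
  have hrat : ∀ z : K, σ z = z → τ z = z → ∃ q : ℚ, z = (q : K) := by
    intro z h1 h2
    have : z ∈ (⊥ : IntermediateField ℚ K) := by
      rw [IsGalois.mem_bot_iff_fixed]
      intro ρ
      rcases hall ρ with rfl | rfl | rfl | rfl
      · rfl
      · exact h1
      · exact h2
      · rw [AlgEquiv.mul_apply, h2, h1]
    rw [IntermediateField.mem_bot] at this
    obtain ⟨q, hq⟩ := this
    exact ⟨q, by rw [← hq]; simp⟩
  obtain ⟨qs, hqs⟩ := hrat (s ^ 2) (by rw [map_pow, hs1]) (by rw [map_pow, hs2]; ring)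
  obtain ⟨qt, hqt⟩ := hrat (t ^ 2) (by rw [map_pow, ht2]; ring) (by rw [map_pow, ht1])
  obtain ⟨a, c, ha, hc0, hca⟩ := exists_scale s hs0 qs hqs
  obtain ⟨b, d, hb, hd0, hdb⟩ := exists_scale t ht0 qt hqt
  have hcK : (c : K) ≠ 0 := by exact_mod_cast hc0
  have hdK : (d : K) ≠ 0 := by exact_mod_cast hd0
  refine ⟨σ, τ, a, b, c * s, d * t, ha, hb, hca, hdb, mul_ne_zero hcK hs0, mul_ne_zero hdK ht0,
    ?_, ?_, ?_, ?_, hall⟩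
  · rw [map_mul, map_ratCast, hs1]
  · rw [map_mul, map_ratCast, hs2]; ring
  · rw [map_mul, map_ratCast, ht1]
  · rw [map_mul, map_ratCast, ht2]; ring

lemma list_root {K : Type*} [Field K] [NumberField K] (ρ : K ≃ₐ[ℚ] K) (l : List ℤ)
    (h : ∀ d ∈ l, ∃ w : K, w ^ 2 = (d : K) ∧ ρ w = w) :
    ∃ W : K, W ^ 2 = (l.prod : K) ∧ ρ W = W := by
  induction l with
  | nil => exact ⟨1, by simp, by simp⟩
  | cons d l ih =>
    obtain ⟨W, hW, hρ⟩ := ih (fun d hd => h d (by simp [hd]))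
    obtain ⟨w, hw, hρ'⟩ := h d (by simp)
    exact ⟨w * W, by rw [mul_pow, hw, hW]; simp, by rw [map_mul, hρ, hρ']⟩

lemma root_moved {K : Type*} [Field K] [NumberField K] (ρ : K ≃ₐ[ℚ] K) (l : List ℤ)
    {m c : ℤ} (hc : c ≠ 0) (hl : c ^ 2 * m = l.prod) (x : K) (hx : x ^ 2 = (m : K))
    (hρ : ρ x ≠ x) (h : ∀ d ∈ l, ∃ w : K, w ^ 2 = (d : K)) :
    ∃ d ∈ l, ∃ w : K, w ^ 2 = (d : K) ∧ ρ w ≠ w := by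
  by_contra hcon
  push Not at hcon
  obtain ⟨W, hW, hWρ⟩ := list_root ρ l (fun d hd => by
    obtain ⟨w, hw⟩ := h d hd
    exact ⟨w, hw, hcon d hd w hw⟩)
  apply hρ
  have hcK : (c : K) ≠ 0 := by exact_mod_cast hc
  have h1 : ((c : K) * x) ^ 2 = W ^ 2 := by
    rw [hW, mul_pow, hx, ← hl]; push_cast; ring
  apply mul_left_cancel₀ hcK
  rcases sq_eq_sq_iff_eq_or_eq_neg.mp h1 with h2 | h2
  · have := congrArg ρ h2
    rw [map_mul, map_intCast, hWρ, ← h2] at this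
    exact this
  · have := congrArg ρ h2
    rw [map_mul, map_intCast, map_neg, hWρ, ← h2] at this
    exact this

lemma list_prod_neg (l : List ℤ) (h : l.prod < 0) : ∃ d ∈ l, d < 0 := by
  by_contra hcon
  push Not at hcon
  exact absurd (List.prod_nonneg hcon) (by omega)

lemma genus_roots {K : Type*} [Field K] [NumberField K] [IsGalois ℚ K] {a b : ℤ} (s t : K)
    (ha : a ≠ 0) (hb : b ≠ 0) (hs : s ^ 2 = a) (ht : t ^ 2 = b)
    (hgen : ∀ σ : K ≃ₐ[ℚ] K, σ s = s → σ t = t → σ = 1) {e : ℤ} (he : e < 0) (δ : K)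
    (hδ : δ ^ 2 = e) {u : ℕ} (hu : Odd u) (hE : Monoid.exponent (ClassGroup (𝓞 K)) ∣ u)
    {m : ℤ} (hm : Squarefree m) (hns : ¬ IsSquare m) (r : K) (hr : r ^ 2 = m) :
    ∃ (l : List ℤ) (c : ℤ), c ≠ 0 ∧ c ^ 2 * m = l.prod ∧
      ∀ d ∈ l, Pstar d ∧ ∃ w : K, w ^ 2 = (d : K) := by
  obtain ⟨S, hS, e', hme, he'⟩ := squarefree_decomp hm
  have G := fun d hd => genus_sqrt s t ha hb hs ht hgen he δ hδ hE (m := m) (d := d) hns hd r hr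
  have hodd : ∀ p ∈ S, ∃ w : K, w ^ 2 = (((-1) ^ ((p - 1) / 2) * (p : ℤ) : ℤ) : K) := by
    intro p hp
    obtain ⟨hp1, hp2, hp3⟩ := hS p hp
    refine G _ (mul_ne_zero (by simp) (by exact_mod_cast hp1.ne_zero)) ?_
    intro q hq hlt x y A hA h
    have hnat : ((-1) ^ ((p - 1) / 2) * (p : ℤ)).natAbs = p := by
      rw [Int.natAbs_mul, Int.natAbs_pow]; simp
    rw [hnat] at hlt
    exact good_odd hm hp1 hp2 hp3 hu hq (by omega) (by omega) hA h
  set l0 : List ℤ := S.toList.map (fun p : ℕ => (-1) ^ ((p - 1) / 2) * (p : ℤ)) with hl0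
  have hl0prod : l0.prod = ∏ p ∈ S, ((-1) ^ ((p - 1) / 2) * (p : ℤ)) := by
    rw [hl0, Finset.prod_map_toList]
  have hl0mem : ∀ d ∈ l0, Pstar d ∧ ∃ w : K, w ^ 2 = (d : K) := by
    intro d hd
    rw [hl0, List.mem_map] at hd
    obtain ⟨p, hp, rfl⟩ := hd
    rw [Finset.mem_toList] at hp
    exact ⟨Or.inr (Or.inr (Or.inr ⟨p, (hS p hp).1, (hS p hp).2.1, rfl⟩)), hodd p hp⟩
  have hfin : ∀ e'' : ℤ, Pstar (4 * e'') → (∃ w : K, w ^ 2 = (e'' : K)) → e' = e'' →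
      ∃ (l : List ℤ) (c : ℤ), c ≠ 0 ∧ c ^ 2 * m = l.prod ∧
      ∀ d ∈ l, Pstar d ∧ ∃ w : K, w ^ 2 = (d : K) := by
    rintro e'' hP ⟨w, hw⟩ rfl
    refine ⟨(4 * e') :: l0, 2, two_ne_zero, ?_, ?_⟩
    · rw [List.prod_cons, hl0prod, hme]; ring
    · intro d hd
      rcases List.mem_cons.mp hd with rfl | hd
      · exact ⟨hP, 2 * w, by rw [mul_pow, hw]; push_cast; ring⟩
      · exact hl0mem d hd
  rcases he' with h1 | ⟨h1, h2⟩ | ⟨h1, h2⟩ | ⟨h1, h2⟩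
  · exact ⟨l0, 1, one_ne_zero, by rw [hl0prod, hme, h1]; ring, hl0mem⟩
  · refine hfin (-1) (Or.inr (Or.inl rfl)) (G _ (by norm_num) ?_) h1
    intro q hq hlt x y A hA h
    exact (good_two hm (Or.inr h2) hu hq (by omega) hA h).1 h2
  · refine hfin 2 (Or.inl rfl) (G _ (by norm_num) ?_) h1
    intro q hq hlt x y A hA h
    exact (good_two hm (Or.inl (by omega)) hu hq (by omega) hA h).2.1 h2
  · refine hfin (-2) (Or.inr (Or.inr (Or.inl rfl))) (G _ (by norm_num) ?_) h1
    intro q hq hlt x y A hA h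
    exact (good_two hm (Or.inl (by omega)) hu hq (by omega) hA h).2.2 h2

lemma nonsquare_of_moved {K : Type*} [Field K] [NumberField K] (ρ : K ≃ₐ[ℚ] K) {m : ℤ} (x : K)
    (hx : x ^ 2 = (m : K)) (h : ρ x ≠ x) : ¬ IsSquare m := by
  rintro ⟨c, rfl⟩
  apply h
  have : x ^ 2 = (c : K) ^ 2 := by rw [hx]; push_cast; ring
  rcases sq_eq_sq_iff_eq_or_eq_neg.mp this with h | h <;> rw [h] <;> simp

lemma moved_neg {K : Type*} [Field K] [NumberField K] (ρ : K ≃ₐ[ℚ] K) {m : ℤ} (x : K)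
    (hx : x ^ 2 = (m : K)) : ρ x = x ∨ ρ x = -x := by
  apply sq_eq_sq_iff_eq_or_eq_neg.mp
  rw [← map_pow, hx, map_intCast]

/-- Generation of `K` by square roots of elements of `P*`. -/
lemma exists_pstar_pair {K : Type*} [Field K] [NumberField K] [IsGalois ℚ K]
    (e : (K ≃ₐ[ℚ] K) ≃* (Fin 2 → Multiplicative (ZMod 2)))
    (κ : K ≃ₐ[ℚ] K) (hκ : κ ≠ 1) (hκneg : ∀ (x : K) (m : ℤ), x ^ 2 = m → κ x ≠ x → m < 0)
    {u : ℕ} (hu : Odd u) (hE : Monoid.exponent (ClassGroup (𝓞 K)) ∣ u) :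
    ∃ (p₁ p₂ : ℤ) (w₁ w₂ : K) (ρ : K ≃ₐ[ℚ] K), Pstar p₁ ∧ Pstar p₂ ∧ p₁ < 0 ∧
      w₁ ^ 2 = (p₁ : K) ∧ w₂ ^ 2 = (p₂ : K) ∧ ρ w₁ = w₁ ∧ ρ w₂ ≠ w₂ := by
  obtain ⟨σ, τ, a, b, s, t, ha, hb, hs, ht, hs0, ht0, hσs, hτs, hτt, hσt, hall⟩ :=
    biquad_structure e
  have hnes : -s ≠ s := fun h => hs0 (self_eq_neg.mp h.symm)
  have hnet : -t ≠ t := fun h => ht0 (self_eq_neg.mp h.symm)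
  have hgen : ∀ σ : K ≃ₐ[ℚ] K, σ s = s → σ t = t → σ = 1 := by
    intro ρ h1 h2
    rcases hall ρ with rfl | rfl | rfl | rfl
    · rfl
    · exact absurd (hσt ▸ h2) hnet
    · exact absurd (hτs ▸ h1) hnes
    · rw [AlgEquiv.mul_apply, hτs, map_neg, hσs] at h1
      exact absurd h1 hnes
  have hmove : ∀ ρ : K ≃ₐ[ℚ] K, ρ ≠ 1 → ρ s ≠ s ∨ ρ t ≠ t := by
    intro ρ hρ
    by_contra hcon
    push Not at hcon
    exact hρ (hgen ρ hcon.1 hcon.2)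
  have hnsa : ¬ IsSquare a := nonsquare_of_moved τ s hs (by rw [hτs]; exact hnes)
  have hnsb : ¬ IsSquare b := nonsquare_of_moved σ t ht (by rw [hσt]; exact hnet)
  obtain ⟨m₀, x₀, hx₀, hm₀⟩ : ∃ (m : ℤ) (x : K), x ^ 2 = (m : K) ∧ m < 0 := by
    rcases hmove κ hκ with h | h
    · exact ⟨a, s, hs, hκneg s a hs h⟩
    · exact ⟨b, t, ht, hκneg t b ht h⟩
  obtain ⟨la, ca, hca, hla, hla'⟩ := genus_roots s t ha.ne_zero hb.ne_zero hs ht hgen hm₀ x₀ hx₀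
    hu hE ha hnsa s hs
  obtain ⟨lb, cb, hcb, hlb, hlb'⟩ := genus_roots s t ha.ne_zero hb.ne_zero hs ht hgen hm₀ x₀ hx₀
    hu hE hb hnsb t ht
  have hmv : ∀ ρ : K ≃ₐ[ℚ] K, ρ ≠ 1 → ∃ (p : ℤ) (w : K), Pstar p ∧ w ^ 2 = (p : K) ∧ ρ w ≠ w := by
    intro ρ hρ
    rcases hmove ρ hρ with h | h
    · obtain ⟨d, hd, w, hw, hw'⟩ := root_moved ρ la hca hla s hs h (fun d hd => (hla' d hd).2)
      exact ⟨d, w, (hla' d hd).1, hw, hw'⟩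
    · obtain ⟨d, hd, w, hw, hw'⟩ := root_moved ρ lb hcb hlb t ht h (fun d hd => (hlb' d hd).2)
      exact ⟨d, w, (hlb' d hd).1, hw, hw'⟩
  obtain ⟨p₁, w₁, hp₁, hw₁, hκw⟩ := hmv κ hκ
  have hp₁neg := hκneg w₁ p₁ hw₁ hκw
  have hσ1 : σ ≠ 1 := by rintro rfl; exact hnet hσt.symm
  have hτ1 : τ ≠ 1 := by rintro rfl; exact hnes hτs.symm
  have hστ1 : σ * τ ≠ 1 := by
    intro h
    have := congrArg (fun ρ : K ≃ₐ[ℚ] K => ρ s) h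
    simp only [AlgEquiv.mul_apply, hτs, map_neg, hσs, AlgEquiv.one_apply] at this
    exact hnes this
  obtain ⟨ρ, hρ1, hρw⟩ : ∃ ρ : K ≃ₐ[ℚ] K, ρ ≠ 1 ∧ ρ w₁ = w₁ := by
    rcases moved_neg σ w₁ hw₁ with h | h
    · exact ⟨σ, hσ1, h⟩
    rcases moved_neg τ w₁ hw₁ with h' | h'
    · exact ⟨τ, hτ1, h'⟩
    · exact ⟨σ * τ, hστ1, by rw [AlgEquiv.mul_apply, h', map_neg, h, neg_neg]⟩
  obtain ⟨p₂, w₂, hp₂, hw₂, hρw₂⟩ := hmv ρ hρ1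
  exact ⟨p₁, p₂, w₁, w₂, ρ, hp₁, hp₂, hp₁neg, hw₁, hw₂, hρw, hρw₂⟩

/-- The chosen complex square root of `m`. -/
noncomputable def croot (m : ℤ) : ℂ := (m : ℂ) ^ ((1 : ℂ) / 2)

lemma croot_sq (m : ℤ) : croot m ^ 2 = (m : ℂ) := by
  rw [croot, one_div]
  exact Complex.cpow_nat_inv_pow (m : ℂ) two_ne_zero

lemma croot_mem_Qsqrt (m : ℤ) : croot m ∈ Qsqrt m :=
  IntermediateField.mem_adjoin_simple_self ℚ _

lemma Qsqrt_le {m : ℤ} {K : IntermediateField ℚ ℂ} (w : ℂ) (hw : w ^ 2 = (m : ℂ)) (hK : w ∈ K) :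
    Qsqrt m ≤ K := by
  rw [Qsqrt, IntermediateField.adjoin_simple_le_iff]
  have h : croot m ^ 2 = w ^ 2 := by rw [croot_sq, hw]
  change croot m ∈ K
  rcases sq_eq_sq_iff_eq_or_eq_neg.mp h with h | h
  · rwa [h]
  · rw [h]; exact neg_mem hK

lemma Qsqrt_mem {m : ℤ} (hm : ¬ IsSquare m) (z : ℂ) (hz : z ∈ Qsqrt m) :
    ∃ x y : ℚ, z = x + y * croot m := by
  have hr := croot_sq m
  induction hz using IntermediateField.adjoin_induction with
  | mem z hz =>
    rw [Set.mem_singleton_iff] at hz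
    exact ⟨0, 1, by rw [hz]; simp [croot]⟩
  | algebraMap q => exact ⟨q, 0, by simp⟩
  | add a b _ _ ha hb =>
    obtain ⟨x, y, rfl⟩ := ha
    obtain ⟨x', y', rfl⟩ := hb
    exact ⟨x + x', y + y', by push_cast; ring⟩
  | mul a b _ _ ha hb =>
    obtain ⟨x, y, rfl⟩ := ha
    obtain ⟨x', y', rfl⟩ := hb
    exact ⟨x * x' + m * (y * y'), x * y' + y * x', by
      push_cast; linear_combination (y * y' : ℂ) * hr⟩
  | inv a _ ha =>
    obtain ⟨x, y, rfl⟩ := ha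
    by_cases hn : x ^ 2 - m * y ^ 2 = 0
    · have hy : y = 0 := by
        by_contra hy
        apply rat_not_sq hm (x / y)
        rw [div_pow, div_eq_iff (pow_ne_zero 2 hy)]
        linarith
      have hx : x = 0 := by
        rw [hy] at hn
        simpa using hn
      exact ⟨0, 0, by simp [hx, hy]⟩
    · refine ⟨x / (x ^ 2 - m * y ^ 2), -y / (x ^ 2 - m * y ^ 2), ?_⟩
      have hn' : ((x : ℂ) ^ 2 - m * (y : ℂ) ^ 2) ≠ 0 := by exact_mod_cast hn
      apply inv_eq_of_mul_eq_one_right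
      push_cast
      have h1 : ((x : ℂ) + y * croot m) * (x / ((x : ℂ) ^ 2 - m * (y : ℂ) ^ 2) +
          -y / ((x : ℂ) ^ 2 - m * (y : ℂ) ^ 2) * croot m) =
          ((x : ℂ) ^ 2 - croot m ^ 2 * (y : ℂ) ^ 2) / ((x : ℂ) ^ 2 - m * (y : ℂ) ^ 2) := by ring
      rw [h1, hr, div_self hn']

lemma Qsqrt_finrank {m : ℤ} (hm : ¬ IsSquare m) : Module.finrank ℚ (Qsqrt m) = 2 := by
  have hroot : Polynomial.aeval (croot m)
      (Polynomial.X ^ 2 - Polynomial.C (m : ℚ)) = 0 := by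
    simp [croot_sq]
  have hirr : Irreducible (Polynomial.X ^ 2 - Polynomial.C (m : ℚ)) := by
    exact X_pow_sub_C_irreducible_of_prime Nat.prime_two (fun c => rat_not_sq hm c)
  have hmon : (Polynomial.X ^ 2 - Polynomial.C (m : ℚ)).Monic :=
    Polynomial.monic_X_pow_sub_C _ two_ne_zero
  have hmin := minpoly.eq_of_irreducible_of_monic hirr hroot hmon
  have hintg : IsIntegral ℚ (croot m) := ⟨_, hmon, hroot⟩
  change Module.finrank ℚ (IntermediateField.adjoin ℚ {croot m}) = 2
  rw [IntermediateField.adjoin.finrank hintg, ← hmin, Polynomial.natDegree_X_pow_sub_C]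

lemma pstar_not_square {d : ℤ} (hd : Pstar d) : ¬ IsSquare d := by
  rcases hd with rfl | rfl | rfl | ⟨p, hp, hpo, rfl⟩
  · rintro ⟨c, hc⟩
    have h1 : c < 3 := by nlinarith
    have h2 : -3 < c := by nlinarith
    interval_cases c <;> omega
  · rintro ⟨c, hc⟩; nlinarith [mul_self_nonneg c]
  · rintro ⟨c, hc⟩; nlinarith [mul_self_nonneg c]
  · rcases Nat.even_or_odd ((p - 1) / 2) with h | h
    · rw [h.neg_one_pow, one_mul]
      exact (Nat.prime_iff_prime_int.mp hp).irreducible.not_isSquare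
    · rw [h.neg_one_pow]
      rintro ⟨c, hc⟩
      have := hp.pos
      nlinarith [mul_self_nonneg c]

instance Qsqrt_numberField (m : ℤ) : NumberField (Qsqrt m) := by
  have : FiniteDimensional ℚ (Qsqrt m) := by
    have hintg : IsIntegral ℚ (croot m) := by
      refine IsIntegral.of_pow two_pos ?_
      rw [croot_sq]
      exact_mod_cast isIntegral_algebraMap (R := ℚ) (A := ℂ) (x := (m : ℚ))
    exact IntermediateField.adjoin.finiteDimensional hintg
  exact { to_charZero := inferInstance, to_finiteDimensional := this }

lemma Efield_two {m : ℤ} (hm : ¬ IsSquare m) {K : IntermediateField ℚ ℂ} [NumberField K]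
    (h4 : Module.finrank ℚ K = 4) (hle : Qsqrt m ≤ K) {u : ℕ} (hE : Efield K ∣ u) :
    Efield (Qsqrt m) ∣ 2 * u := by
  let _ : Algebra (Qsqrt m) K := (IntermediateField.inclusion hle).toRingHom.toAlgebra
  have : IsScalarTower ℚ (Qsqrt m) K := IsScalarTower.of_algebraMap_eq (fun x => rfl)
  have h1 := Module.finrank_mul_finrank ℚ (Qsqrt m) K
  rw [h4, Qsqrt_finrank hm] at h1
  exact classGroup_descent (k := Qsqrt m) (K := K) (by omega) hE

lemma Efield_halve {m : ℤ} (hm : Pstar m) (hneg : m < 0) {u : ℕ}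
    (h : Efield (Qsqrt m) ∣ 2 * u) : Efield (Qsqrt m) ∣ u := by
  refine exponent_halve ?_ h
  refine pstar_no_two_torsion hm hneg (⟨croot m, croot_mem_Qsqrt m⟩ : Qsqrt m) ?_ ?_
  · apply Subtype.ext
    push_cast
    exact croot_sq m
  · intro z
    obtain ⟨x, y, h⟩ := Qsqrt_mem (pstar_not_square hm) z z.2
    exact ⟨x, y, Subtype.ext (by push_cast; exact h)⟩

/-- Theorem on the shape of imaginary biquadratic fields whose class group has
exponent dividing an odd number `u`. -/
theorem stmt7 (u : ℕ) (hu : Odd u) (hupos : 0 < u)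
    (K : IntermediateField ℚ ℂ)
    (hK : IsNQuadratic 2 K) (him : IsImaginary K)
    (hE : Efield K ∣ u) :
    ∃ p₁ p₂ : ℤ, Pstar p₁ ∧ p₁ < 0 ∧ Pstar p₂ ∧
      K = Qsqrt p₁ ⊔ Qsqrt p₂ ∧
      Efield (Qsqrt p₁) ∣ u ∧
      (p₂ < 0 → Efield (Qsqrt p₂) ∣ u) ∧
      (0 < p₂ → Efield (Qsqrt (p₁ * p₂)) ∣ 2 * u) := by
  obtain ⟨hfd, hgal, ⟨e⟩⟩ := hK
  have hnf : NumberField K := { to_charZero := inferInstance, to_finiteDimensional := hfd }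
  have h4 : Module.finrank ℚ K = 4 := by
    rw [← IsGalois.card_aut_eq_finrank, Nat.card_congr e.toEquiv, Nat.card_eq_fintype_card]
    decide
  set κ : K ≃ₐ[ℚ] K := (Complex.conjAe.restrictScalars ℚ).restrictNormal K with hκdef
  have hκ : ∀ x : K, ((κ x : K) : ℂ) = (starRingEnd ℂ) (x : ℂ) := fun x =>
    AlgEquiv.restrictNormal_commutes (Complex.conjAe.restrictScalars ℚ) K x
  have hκ1 : κ ≠ 1 := by
    intro h
    obtain ⟨x, hx⟩ := him
    have h1 := hκ x
    rw [h] at h1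
    exact hx (Complex.conj_eq_iff_im.mp h1.symm)
  have hκneg : ∀ (x : K) (m : ℤ), x ^ 2 = m → κ x ≠ x → m < 0 := by
    intro x m hx hne
    by_contra hm
    push Not at hm
    apply hne
    apply Subtype.ext
    rw [hκ, Complex.conj_eq_iff_im]
    have hx' : (x : ℂ) ^ 2 = (m : ℂ) := by exact_mod_cast congrArg (fun y : K => (y : ℂ)) hx
    have hsq : (x : ℂ) ^ 2 = ((Real.sqrt m : ℝ) : ℂ) ^ 2 := by
      rw [hx', ← Complex.ofReal_pow, Real.sq_sqrt (by exact_mod_cast hm)]; simp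
    rcases sq_eq_sq_iff_eq_or_eq_neg.mp hsq with h | h <;> rw [h] <;> simp
  obtain ⟨p₁, p₂, w₁, w₂, ρ, hp₁, hp₂, hneg, hw₁, hw₂, hρ₁, hρ₂⟩ :=
    exists_pstar_pair e κ hκ1 hκneg hu hE
  have hw₁' : (w₁ : ℂ) ^ 2 = (p₁ : ℂ) := by exact_mod_cast congrArg (fun y : K => (y : ℂ)) hw₁
  have hw₂' : (w₂ : ℂ) ^ 2 = (p₂ : ℂ) := by exact_mod_cast congrArg (fun y : K => (y : ℂ)) hw₂
  have hle₁ : Qsqrt p₁ ≤ K := Qsqrt_le _ hw₁' w₁.2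
  have hle₂ : Qsqrt p₂ ≤ K := Qsqrt_le _ hw₂' w₂.2
  have hns₁ := pstar_not_square hp₁
  have hns₂ := pstar_not_square hp₂
  have hL : K = Qsqrt p₁ ⊔ Qsqrt p₂ := by
    have hle : Qsqrt p₁ ⊔ Qsqrt p₂ ≤ K := sup_le hle₁ hle₂
    have hfdL : FiniteDimensional ℚ ↥(Qsqrt p₁ ⊔ Qsqrt p₂) := inferInstance
    have hd1 : Module.finrank ℚ (Qsqrt p₁) ∣ Module.finrank ℚ ↥(Qsqrt p₁ ⊔ Qsqrt p₂) :=
      IntermediateField.finrank_dvd_of_le_right le_sup_left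
    have hd2 : Module.finrank ℚ ↥(Qsqrt p₁ ⊔ Qsqrt p₂) ∣ Module.finrank ℚ K :=
      IntermediateField.finrank_dvd_of_le_right hle
    have hne2 : Module.finrank ℚ ↥(Qsqrt p₁ ⊔ Qsqrt p₂) ≠ 2 := by
      intro h2
      have heq : Qsqrt p₁ = Qsqrt p₁ ⊔ Qsqrt p₂ :=
        IntermediateField.eq_of_le_of_finrank_eq le_sup_left (by rw [h2, Qsqrt_finrank hns₁])
      have hmem : croot p₂ ∈ Qsqrt p₁ := by
        rw [heq]; exact (le_sup_right : Qsqrt p₂ ≤ _) (croot_mem_Qsqrt p₂)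
      have hw₂mem : (w₂ : ℂ) ∈ Qsqrt p₁ := by
        have h : (w₂ : ℂ) ^ 2 = croot p₂ ^ 2 := by rw [croot_sq, hw₂']
        rcases sq_eq_sq_iff_eq_or_eq_neg.mp h with h | h
        · rwa [h]
        · rw [h]; exact neg_mem hmem
      obtain ⟨x, y, hxy⟩ := Qsqrt_mem hns₁ _ hw₂mem
      have h : croot p₁ ^ 2 = (w₁ : ℂ) ^ 2 := by rw [croot_sq, hw₁']
      apply hρ₂
      rcases sq_eq_sq_iff_eq_or_eq_neg.mp h with h | h
      · have : w₂ = (x : K) + y * w₁ := Subtype.ext (by push_cast; rw [hxy, h])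
        rw [this, map_add, map_mul, map_ratCast, map_ratCast, hρ₁]
      · have : w₂ = (x : K) - y * w₁ := Subtype.ext (by push_cast; rw [hxy, h]; ring)
        rw [this, map_sub, map_mul, map_ratCast, map_ratCast, hρ₁]
    rw [Qsqrt_finrank hns₁] at hd1
    rw [h4] at hd2
    refine (IntermediateField.eq_of_le_of_finrank_eq hle ?_).symm
    rw [h4]
    have := Nat.le_of_dvd (by norm_num) hd2
    interval_cases Module.finrank ℚ ↥(Qsqrt p₁ ⊔ Qsqrt p₂) <;> omega
  refine ⟨p₁, p₂, hp₁, hneg, hp₂, hL, ?_, ?_, ?_⟩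
  · exact Efield_halve hp₁ hneg (Efield_two hns₁ h4 hle₁ hE)
  · exact fun h => Efield_halve hp₂ h (Efield_two hns₂ h4 hle₂ hE)
  · intro hpos
    refine Efield_two ?_ h4 ?_ hE
    · rintro ⟨c, hc⟩
      nlinarith [mul_self_nonneg c, mul_neg_of_neg_of_pos hneg hpos]
    · refine Qsqrt_le ((w₁ : ℂ) * w₂) ?_ (mul_mem w₁.2 w₂.2)
      rw [mul_pow, hw₁', hw₂']; push_cast; ring
end
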